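/- Let r ≥ 1 be an integer, λ_1,…,λ_r, α_1,…,α_r ∈ [0,1), μ_i := λ_1+⋯+λ_i, and let 1 = i_1 < i_2 < ⋯ < i_m (m ≥ 1) be exactly those indices i with μ_i ∈ ℤ. Let S be the collection of hyperplanes consisting of H_{1,0} together with H_{i_j,k} for 2 ≤ j ≤ m and integers k ≥ 0 with i_j − k ≤ j. Then there exists a function F analytic on ℂ^r ∖ ⋃_{H∈S} H such that F(s) = L_r(λ_1,…,λ_r; α_1,…,α_r; s) for all s ∈ U_r, and all poles of F along members of S are at most simple: for every point p ∈ ℂ^r, the function s ↦ (∏_{H_{i,k}∈S, p∈H_{i,k}} (s_1+⋯+s_i−i+k)) · F(s) extends to a function analytic on a neighborhood of p. -/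

import Mathlib

/-!
The continuation is obtained one variable at a time from asymptotic expansions of tail sums. For
fixed parameters the sum over `n_1 > ⋯ > n_i > N` is built from the sum over
`n_1 > ⋯ > n_{i-1} > n` by multiplying with `e(λ_i n) (n+α_i)^{-s_i}` and summing over `n > N`.
The claim carried through the induction (`Expn`, `iterated_expn`) is that, after multiplication by
finitely many linear factors, this sum equals
`e(μ_i N) ∑_{k < M} c_k(s) (N+1)^{-τ_i(s)-k}` plus a remainder `O(N^{-A})`, with `c_k` and the
remainder analytic on a whole ball of `ℂ^r`, the identity itself being needed only on the domain
of convergence. Here `τ_i = s_1 + ⋯ + s_i - j`, with `j` the number of integers among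
`μ_1, …, μ_i`. Analyticity of the remainder, uniformly in `N`, means analyticity of a map into the
Banach space `ℓ^∞` (`Rem`), on which tail summation is a bounded operator after a loss of two
powers of `N`.

The input in depth one is `zeta_expn`. Expanding the differences of `e(λ n) (n+1+α)^{-v}` by
Taylor's formula around `n + α` and telescoping (`translation`) expresses the tail of the Lerch
zeta function at `w` through a boundary term and the tails at `w + 1, w + 2, …`. If `λ` is not an
integer the recurrence is solved without division by a function of `w`; if `λ` is an integer the
coefficient `e(-λ) - 1` vanishes, and the recurrence, used at `v = w - 1`, continues `w - 1` times
the tail, with leading term of order `N^{1-w}` instead of `N^{-w}`.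

In the induction step (`Expn.step`) each power `(N+1)^{-τ-k}` is summed by `zeta_expn` with
parameter `μ_i`. Poles arise only when `μ_i` is an integer; they are simple and lie on
`s_1 + ⋯ + s_i = i - k` with `k ≥ i - j`, and in depth one only on `s_1 = 1`. At `N = 0` this is a
continuation of the multiple Lerch function, times finitely many linear factors, to any ball
(`local_continuation`); by the identity theorem these continuations are compatible and glue to
the required function (`glue`).
-/

open Complex

/-- `e(a) = e^{2πia}`. -/
noncomputable def eR (a : ℝ) : ℂ := Complex.exp (2 * Real.pi * Complex.I * a)

/-- For a real `b > 0` and `z ∈ ℂ`, `b^z := exp (z log b)` (real logarithm). -/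
noncomputable def rpowC (b : ℝ) (z : ℂ) : ℂ := Complex.exp (z * Real.log b)

/-- Strictly decreasing tuples of positive integers `n_1 > n_2 > ⋯ > n_r > 0`. -/
def DTuple (r : ℕ) : Type := {n : Fin r → ℕ // StrictAnti n ∧ ∀ i, 0 < n i}

/-- The term `e(λ_1 n_1)⋯e(λ_r n_r) / ((n_1+α_1)^{s_1}⋯(n_r+α_r)^{s_r})`. -/
noncomputable def lerchTerm {r : ℕ} (lam al : Fin r → ℝ) (s : Fin r → ℂ)
    (n : Fin r → ℕ) : ℂ :=
  (∏ i, eR (lam i * n i)) / ∏ i, rpowC ((n i : ℝ) + al i) (s i)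

/-- The multiple Lerch zeta function (as a sum over strictly decreasing tuples). -/
noncomputable def multipleLerch {r : ℕ} (lam al : Fin r → ℝ) (s : Fin r → ℂ) : ℂ :=
  ∑' n : DTuple r, lerchTerm lam al s n.1

/-- The term `(n_1+α_1)^{-s_1}⋯(n_r+α_r)^{-s_r}`. -/
noncomputable def hzTerm {r : ℕ} (al : Fin r → ℝ) (s : Fin r → ℂ) (n : Fin r → ℕ) : ℂ :=
  ∏ i, rpowC ((n i : ℝ) + al i) (-(s i))

/-- The multiple Hurwitz zeta function (as a sum over strictly decreasing tuples). -/
noncomputable def multipleHurwitz {r : ℕ} (al : Fin r → ℝ) (s : Fin r → ℂ) : ℂ :=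
  ∑' n : DTuple r, hzTerm al s n.1

/-- `U_r(m) = {s ∈ ℂ^r : Re(s_1+⋯+s_i) > i − m for 1 ≤ i ≤ r}` (0-based indexing). -/
def Ur (r : ℕ) (m : ℤ) : Set (Fin r → ℂ) :=
  {s | ∀ i : Fin r, ((i : ℕ) + 1 - m : ℝ) < (∑ j ∈ Finset.Iic i, s j).re}

/-- `(s)_k = s(s+1)⋯(s+k)/(k+1)!` for `k ≥ 0` and `(s)_k = 1` for `k < 0`. -/
noncomputable def pochZ (s : ℂ) (k : ℤ) : ℂ :=
  if 0 ≤ k then (∏ j ∈ Finset.range (k.toNat + 1), (s + j)) / (Nat.factorial (k.toNat + 1))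
  else 1

/-- The hyperplane `H_{i,k} : s_1 + ⋯ + s_i = i − k` (0-based: `i` here is paper's `i−1`). -/
def Hplane (r : ℕ) (i : Fin r) (k : ℕ) : Set (Fin r → ℂ) :=
  {s | ∑ j ∈ Finset.Iic i, s j = ((i : ℕ) + 1 : ℂ) - k}

/-- The union of the hyperplanes `H_{i,k}` for `(i,k)` satisfying the predicate `P`. -/
def polarSet {r : ℕ} (P : Fin r → ℕ → Prop) : Set (Fin r → ℂ) :=
  {s | ∃ i k, P i k ∧ s ∈ Hplane r i k}

/-- `F` has (at most) simple poles along the hyperplanes `H_{i,k}`, `(i,k) ∈ P`: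
around every point `p`, multiplying `F` by the (finitely many) linear factors
`s_1+⋯+s_i−i+k` of the members of `P` passing through `p` yields a function
that extends analytically to a neighbourhood of `p`. -/
def SimplePolesAlong {r : ℕ} (P : Fin r → ℕ → Prop) (F : (Fin r → ℂ) → ℂ) : Prop :=
  ∀ p : Fin r → ℂ, ∀ T : Finset (Fin r × ℕ),
    (∀ i k, (i, k) ∈ T ↔ (P i k ∧ p ∈ Hplane r i k)) →
    ∃ (V : Set (Fin r → ℂ)) (G : (Fin r → ℂ) → ℂ),
      IsOpen V ∧ p ∈ V ∧ AnalyticOnNhd ℂ G V ∧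
      ∀ s ∈ V, s ∉ polarSet P →
        G s = (∏ q ∈ T, ((∑ j ∈ Finset.Iic q.1, s j) - ((q.1 : ℕ) + 1 : ℂ) + (q.2 : ℂ))) * F s

/-- `μ_{i+1} = λ_1 + ⋯ + λ_{i+1} ∈ ℤ` (0-based index `i`). -/
def isIntIdx {r : ℕ} (lam : Fin r → ℝ) (i : Fin r) : Prop :=
  ∃ z : ℤ, ∑ j ∈ Finset.Iic i, lam j = (z : ℝ)

/-- The rank `j` of the index `i` among the indices with `μ ∈ ℤ`,
i.e. the number of indices `i' ≤ i` with `μ_{i'+1} ∈ ℤ`. -/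
noncomputable def rankIdx {r : ℕ} (lam : Fin r → ℝ) (i : Fin r) : ℕ :=
  Nat.card {i' : Fin r // i' ≤ i ∧ isIntIdx lam i'}

/-- The collection `S` of Theorem 2 (case `i_1 = 1`): `H_{1,0}` together with
`H_{i_j,k}` for `2 ≤ j ≤ m`, `k ≥ 0` with `i_j − k ≤ j` (here `j = rankIdx lam i`). -/
def S9 {r : ℕ} (lam : Fin (r + 1) → ℝ) (i : Fin (r + 1)) (k : ℕ) : Prop :=
  (i = 0 ∧ k = 0) ∨
    (isIntIdx lam i ∧ i ≠ 0 ∧ (i : ℕ) + 1 ≤ rankIdx lam i + k)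

/-! ### Remainders analytic with values in `ℓ^∞` -/

lemma rpowC_add (b : ℝ) (z w : ℂ) : rpowC b (z + w) = rpowC b z * rpowC b w := by
  simp [rpowC, add_mul, Complex.exp_add]

lemma rpowC_zero (b : ℝ) : rpowC b 0 = 1 := by simp [rpowC]

lemma rpowC_ne_zero (b : ℝ) (z : ℂ) : rpowC b z ≠ 0 := Complex.exp_ne_zero _

lemma rpowC_neg (b : ℝ) (z : ℂ) : rpowC b (-z) = (rpowC b z)⁻¹ := by
  simp [rpowC, Complex.exp_neg]

lemma rpowC_mul_neg (b : ℝ) (z : ℂ) : rpowC b z * rpowC b (-z) = 1 := by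
  rw [← rpowC_add, add_neg_cancel, rpowC_zero]

lemma norm_rpowC {b : ℝ} (hb : 0 < b) (z : ℂ) : ‖rpowC b z‖ = b ^ z.re := by
  rw [rpowC, Complex.norm_exp, Real.rpow_def_of_pos hb]
  congr 1
  simp [Complex.mul_re, mul_comm]

lemma rpowC_mul_base {a b : ℝ} (ha : 0 < a) (hb : 0 < b) (z : ℂ) :
    rpowC (a * b) z = rpowC a z * rpowC b z := by
  simp [rpowC, Real.log_mul ha.ne' hb.ne', mul_add, Complex.exp_add]

lemma rpowC_neg_nat {b : ℝ} (hb : 0 < b) (m : ℕ) : rpowC b (-(m : ℂ)) = ((b : ℂ)⁻¹) ^ m := by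
  rw [rpowC_neg, inv_pow, rpowC, Complex.exp_nat_mul, ← Complex.ofReal_exp, Real.exp_log hb]

lemma differentiable_rpowC (b : ℝ) : Differentiable ℂ (rpowC b) := by
  unfold rpowC; fun_prop

lemma succ_pos' (n : ℕ) : (0 : ℝ) < (n : ℝ) + 1 := by positivity

lemma one_le_succ' (n : ℕ) : (1 : ℝ) ≤ (n : ℝ) + 1 := by
  have : (0 : ℝ) ≤ n := Nat.cast_nonneg n
  linarith

/-- The Banach algebra `ℓ^∞(ℕ)`, realised as bounded functions on the discrete space `ℕ`. -/
abbrev Bd := BoundedContinuousFunction ℕ ℂ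

/-- A bounded sequence as an element of `Bd`. -/
noncomputable def mkBd (u : ℕ → ℂ) (h : ∃ C, ∀ n, ‖u n‖ ≤ C) : Bd :=
  BoundedContinuousFunction.ofNormedAddCommGroupDiscrete u h.choose h.choose_spec

@[simp] lemma mkBd_apply (u : ℕ → ℂ) (h : ∃ C, ∀ n, ‖u n‖ ≤ C) (n : ℕ) : mkBd u h n = u n := rfl

/-- `Rem A V g`: the family of sequences `n ↦ g n s` is `O(n^{-A})`, analytically in the
parameter `s ∈ V`; precisely, `s ↦ (g n s (n+1)^A)_n` is an analytic map from `V` to `ℓ^∞`. -/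
def Rem {E : Type*} [NormedAddCommGroup E] [NormedSpace ℂ E] (A : ℝ) (V : Set E)
    (g : ℕ → E → ℂ) : Prop :=
  ∃ Φ : E → Bd, AnalyticOnNhd ℂ Φ V ∧ ∀ s ∈ V, ∀ n : ℕ, g n s * rpowC ((n : ℝ) + 1) A = Φ s n

/-- The tail operator `h ↦ (N ↦ ∑_{n > N} h n)`. -/
noncomputable def tailSum (h : ℕ → ℂ) (N : ℕ) : ℂ := ∑' k : ℕ, h (N + 1 + k)

lemma tailSum_congr {h h' : ℕ → ℂ} (H : ∀ n, 1 ≤ n → h n = h' n) (N : ℕ) :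
    tailSum h N = tailSum h' N :=
  tsum_congr fun k => H _ (by omega)

lemma summable_inv_sq_succ : Summable fun k : ℕ => ((k : ℝ) + 1) ^ (-2 : ℝ) := by
  have := (summable_nat_add_iff 1).2 (Real.summable_nat_rpow.2 (by norm_num : (-2 : ℝ) < -1))
  simpa using this

section
variable {E F : Type*} [NormedAddCommGroup E] [NormedSpace ℂ E] [NormedAddCommGroup F]
  [NormedSpace ℂ F] {A A' : ℝ} {V : Set E} {g g' : ℕ → E → ℂ}

lemma Rem.congr (h : Rem A V g) (H : ∀ s ∈ V, ∀ n, g' n s = g n s) : Rem A V g' := by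
  obtain ⟨Φ, h1, h2⟩ := h
  exact ⟨Φ, h1, fun s hs n => by rw [H s hs n, h2 s hs n]⟩

lemma Rem.add (h : Rem A V g) (h' : Rem A V g') : Rem A V fun n s => g n s + g' n s := by
  obtain ⟨Φ, h1, h2⟩ := h
  obtain ⟨Φ', h1', h2'⟩ := h'
  exact ⟨fun s => Φ s + Φ' s, h1.add h1', fun s hs n => by
    simp [← h2 s hs n, ← h2' s hs n, add_mul]⟩

lemma Rem.zero : Rem A V fun _ _ => 0 :=
  ⟨fun _ => 0, analyticOnNhd_const, by simp⟩

lemma Rem.sum {ι : Type*} (I : Finset ι) {G : ι → ℕ → E → ℂ} (h : ∀ i ∈ I, Rem A V (G i)) :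
    Rem A V fun n s => ∑ i ∈ I, G i n s := by
  classical
  induction I using Finset.induction_on with
  | empty => simpa using Rem.zero
  | insert a I ha ih =>
    refine ((h a (by simp)).add (ih fun i hi => h i (by simp [hi]))).congr fun s _ n => ?_
    rw [Finset.sum_insert ha]

lemma Rem.smul {c : E → ℂ} (hc : AnalyticOnNhd ℂ c V) (h : Rem A V g) :
    Rem A V fun n s => c s * g n s := by
  obtain ⟨Φ, h1, h2⟩ := h
  exact ⟨fun s => c s • Φ s, hc.smul h1, fun s hs n => by simp [← h2 s hs n, mul_assoc]⟩

lemma Rem.mul (h : Rem A V g) (h' : Rem A' V g') : Rem (A + A') V fun n s => g n s * g' n s := by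
  obtain ⟨Φ, h1, h2⟩ := h
  obtain ⟨Φ', h1', h2'⟩ := h'
  refine ⟨fun s => Φ s * Φ' s, h1.mul h1', fun s hs n => ?_⟩
  rw [BoundedContinuousFunction.mul_apply, ← h2 s hs n, ← h2' s hs n, Complex.ofReal_add,
    rpowC_add]
  ring

lemma Rem.bmul {u : ℕ → ℂ} (hu : ∃ C, ∀ n, ‖u n‖ ≤ C) (h : Rem A V g) :
    Rem A V fun n s => u n * g n s := by
  obtain ⟨Φ, h1, h2⟩ := h
  refine ⟨fun s => mkBd u hu * Φ s, analyticOnNhd_const.mul h1, fun s hs n => ?_⟩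
  rw [BoundedContinuousFunction.mul_apply, ← h2 s hs n, mkBd_apply, mul_assoc]

lemma Rem.mono (hA : A' ≤ A) (h : Rem A V g) : Rem A' V g := by
  obtain ⟨Φ, h1, h2⟩ := h
  have hu : ∃ C, ∀ n : ℕ, ‖rpowC ((n : ℝ) + 1) ((A' - A : ℝ) : ℂ)‖ ≤ C := by
    refine ⟨1, fun n => ?_⟩
    rw [norm_rpowC (succ_pos' n), Complex.ofReal_re]
    exact Real.rpow_le_one_of_one_le_of_nonpos (one_le_succ' n) (by linarith)
  refine ⟨fun s => mkBd _ hu * Φ s, analyticOnNhd_const.mul h1, fun s hs n => ?_⟩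
  rw [BoundedContinuousFunction.mul_apply, ← h2 s hs n, mkBd_apply, mul_left_comm, ← rpowC_add]
  congr 2
  push_cast; ring

lemma Rem.subset {V' : Set E} (hV : V' ⊆ V) (h : Rem A V g) : Rem A V' g := by
  obtain ⟨Φ, h1, h2⟩ := h
  exact ⟨Φ, h1.mono hV, fun s hs => h2 s (hV hs)⟩

lemma Rem.comp {W : Set F} {g : ℕ → F → ℂ} {φ : E → F} (h : Rem A W g)
    (hφ : AnalyticOnNhd ℂ φ V) (hm : ∀ s ∈ V, φ s ∈ W) : Rem A V fun n s => g n (φ s) := by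
  obtain ⟨Φ, h1, h2⟩ := h
  exact ⟨fun s => Φ (φ s), h1.comp hφ hm, fun s hs n => h2 _ (hm s hs) n⟩

lemma Rem.eq (h : Rem A V g) : ∃ Φ : E → Bd, AnalyticOnNhd ℂ Φ V ∧
    ∀ s ∈ V, ∀ n : ℕ, g n s = Φ s n * rpowC ((n : ℝ) + 1) (-A) := by
  obtain ⟨Φ, h1, h2⟩ := h
  refine ⟨Φ, h1, fun s hs n => ?_⟩
  rw [← h2 s hs n, mul_assoc, rpowC_mul_neg, mul_one]

lemma Rem.analytic (hV : IsOpen V) (h : Rem A V g) (n : ℕ) : AnalyticOnNhd ℂ (g n) V := by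
  obtain ⟨Φ, h1, h2⟩ := h.eq
  intro p hp
  have h3 : AnalyticAt ℂ (fun s => (BoundedContinuousFunction.evalCLM ℂ n : Bd →L[ℂ] ℂ) (Φ s) *
      rpowC ((n : ℝ) + 1) (-A)) p :=
    (((BoundedContinuousFunction.evalCLM ℂ n : Bd →L[ℂ] ℂ).comp_analyticOnNhd h1) p hp).mul
      analyticAt_const
  refine h3.congr ?_
  filter_upwards [hV.mem_nhds hp] with s hs
  rw [h2 s hs n]; rfl

/-- Weighted tail sums of a bounded sequence are bounded when `2 ≤ A`: the weight `(N+1)^{A-2}`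
is at most `(n+1)^{A-2}` for `n > N`, which leaves the convergent series `∑ (n+1)^{-2}`. -/
lemma tail_term_bound (hA : 2 ≤ A) (φ : Bd) (N k : ℕ) :
    ‖rpowC ((N : ℝ) + 1) ((A - 2 : ℝ) : ℂ) *
      (φ (N + 1 + k) * rpowC (((N + 1 + k : ℕ) : ℝ) + 1) (-(A : ℂ)))‖ ≤
      ‖φ‖ * ((k : ℝ) + 1) ^ (-2 : ℝ) := by
  rw [norm_mul, norm_mul, norm_rpowC (succ_pos' _), norm_rpowC (succ_pos' _)]
  have e1 : (-(A : ℂ)).re = -(A - 2) + -2 := by simp; ring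
  rw [e1, Complex.ofReal_re, Real.rpow_add (succ_pos' _)]
  have h1 : ((N : ℝ) + 1) ^ (A - 2) * (((N + 1 + k : ℕ) : ℝ) + 1) ^ (-(A - 2)) ≤ 1 := by
    rw [Real.rpow_neg (succ_pos' _).le, ← div_eq_mul_inv, div_le_one (by positivity)]
    apply Real.rpow_le_rpow (by positivity) _ (by linarith)
    push_cast; linarith [(Nat.cast_nonneg k : (0 : ℝ) ≤ k)]
  have h2 : (((N + 1 + k : ℕ) : ℝ) + 1) ^ (-2 : ℝ) ≤ ((k : ℝ) + 1) ^ (-2 : ℝ) := by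
    apply Real.rpow_le_rpow_of_nonpos (by positivity) _ (by norm_num)
    push_cast; linarith [(Nat.cast_nonneg N : (0 : ℝ) ≤ N)]
  calc _ = ‖φ (N + 1 + k)‖ * ((((N : ℝ) + 1) ^ (A - 2) *
        (((N + 1 + k : ℕ) : ℝ) + 1) ^ (-(A - 2))) * (((N + 1 + k : ℕ) : ℝ) + 1) ^ (-2 : ℝ)) := by
        ring
    _ ≤ ‖φ‖ * (1 * ((k : ℝ) + 1) ^ (-2 : ℝ)) := by
        gcongr
        exact φ.norm_coe_le_norm _
    _ = _ := by rw [one_mul]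

/-- The weighted tail operator as a continuous linear map of `ℓ^∞`. -/
lemma exists_tailCLM (hA : 2 ≤ A) : ∃ Λ : Bd →L[ℂ] Bd, ∀ (φ : Bd) (N : ℕ),
    Λ φ N = ∑' k : ℕ, rpowC ((N : ℝ) + 1) ((A - 2 : ℝ) : ℂ) *
      (φ (N + 1 + k) * rpowC (((N + 1 + k : ℕ) : ℝ) + 1) (-(A : ℂ))) := by
  have hs : ∀ (φ : Bd) (N : ℕ), Summable fun k : ℕ => rpowC ((N : ℝ) + 1) ((A - 2 : ℝ) : ℂ) *
      (φ (N + 1 + k) * rpowC (((N + 1 + k : ℕ) : ℝ) + 1) (-(A : ℂ))) := fun φ N =>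
    Summable.of_norm_bounded (summable_inv_sq_succ.mul_left ‖φ‖) (tail_term_bound hA φ N)
  have hb : ∀ (φ : Bd) (N : ℕ), ‖∑' k : ℕ, rpowC ((N : ℝ) + 1) ((A - 2 : ℝ) : ℂ) *
      (φ (N + 1 + k) * rpowC (((N + 1 + k : ℕ) : ℝ) + 1) (-(A : ℂ)))‖ ≤
      (∑' k : ℕ, ((k : ℝ) + 1) ^ (-2 : ℝ)) * ‖φ‖ := fun φ N => by
    rw [mul_comm, ← tsum_mul_left]
    exact tsum_of_norm_bounded (summable_inv_sq_succ.mul_left ‖φ‖).hasSum (tail_term_bound hA φ N)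
  let Λ₀ : Bd →ₗ[ℂ] Bd :=
    { toFun := fun φ => mkBd _ ⟨_, hb φ⟩
      map_add' := fun φ ψ => by
        ext N
        simp only [mkBd_apply, BoundedContinuousFunction.add_apply]
        rw [← (hs φ N).tsum_add (hs ψ N)]
        exact tsum_congr fun k => by ring
      map_smul' := fun c φ => by
        ext N
        simp only [mkBd_apply, BoundedContinuousFunction.coe_smul, smul_eq_mul, RingHom.id_apply]
        rw [← tsum_mul_left]
        exact tsum_congr fun k => by ring }
  refine ⟨Λ₀.mkContinuous (∑' k : ℕ, ((k : ℝ) + 1) ^ (-2 : ℝ)) fun φ => ?_, fun φ N => rfl⟩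
  refine (BoundedContinuousFunction.norm_le (by positivity)).2 fun N => hb φ N

lemma Rem.summable (hA : 2 ≤ A) (h : Rem A V g) {s : E} (hs : s ∈ V) (N : ℕ) :
    Summable fun k => g (N + 1 + k) s := by
  obtain ⟨Φ, h1, h2⟩ := h.eq
  refine (summable_mul_left_iff (rpowC_ne_zero ((N : ℝ) + 1) ((A - 2 : ℝ) : ℂ))).1 ?_
  refine Summable.of_norm_bounded (summable_inv_sq_succ.mul_left ‖Φ s‖) fun k => ?_
  rw [h2 s hs]
  exact tail_term_bound hA (Φ s) N k

/-- Summation over `n > N` costs at most two powers of `N`: the crude loss is harmless, since all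
expansions are available to arbitrary order. -/
lemma Rem.tail (hA : 2 ≤ A) (h : Rem A V g) :
    Rem (A - 2) V fun N s => tailSum (fun n => g n s) N := by
  obtain ⟨Φ, h1, h2⟩ := h.eq
  obtain ⟨Λ, hΛ⟩ := exists_tailCLM hA
  refine ⟨fun s => Λ (Φ s), Λ.comp_analyticOnNhd h1, fun s hs N => ?_⟩
  rw [hΛ, tsum_mul_left, mul_comm]
  congr 1
  exact tsum_congr fun k => h2 s hs _

end

/-- The unit vectors of `ℓ^∞`. -/
noncomputable def deltaBd (n : ℕ) : Bd :=
  mkBd (Pi.single n 1) ⟨1, fun m => by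
    by_cases h : m = n
    · subst h; simp
    · simp [h]⟩

lemma norm_deltaBd_le (n : ℕ) : ‖deltaBd n‖ ≤ 1 := by
  refine (BoundedContinuousFunction.norm_le zero_le_one).2 fun m => ?_
  by_cases h : m = n
  · subst h; simp [deltaBd]
  · simp [deltaBd, h]

/-- A family of holomorphic functions of one variable which is locally uniformly
`O(n^{-A-2})` satisfies `Rem A`: the corresponding `ℓ^∞`-valued map is a locally normally
convergent series of its components. -/
lemma Rem.of_bound {A : ℝ} {W : Set ℂ} (hW : IsOpen W) {g : ℕ → ℂ → ℂ}
    (hd : ∀ n, DifferentiableOn ℂ (g n) W)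
    (hb : ∀ p ∈ W, ∃ C, ∀ᶠ z in nhds p, ∀ n : ℕ, 1 ≤ n →
      ‖g n z‖ ≤ C * ((n : ℝ) + 1) ^ (-A - 2)) : Rem A W g := by
  classical
  set G : ℕ → ℂ → ℂ := fun n z => g n z * rpowC ((n : ℝ) + 1) A with hG
  have hb' : ∀ p ∈ W, ∃ C, ∀ᶠ z in nhds p, ∀ n : ℕ, ‖G n z‖ ≤ C * ((n : ℝ) + 1) ^ (-2 : ℝ) := by
    intro p hp
    obtain ⟨C, hC⟩ := hb p hp
    have hc : ContinuousAt (g 0) p := ((hd 0).differentiableAt (hW.mem_nhds hp)).continuousAt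
    have h0 : ∀ᶠ z in nhds p, ‖g 0 z‖ < ‖g 0 p‖ + 1 :=
      hc.norm.eventually_lt continuousAt_const (by simp)
    refine ⟨max C (‖g 0 p‖ + 1), ?_⟩
    filter_upwards [hC, h0] with z hz hz0 n
    rcases Nat.eq_zero_or_pos n with rfl | hn
    · have : G 0 z = g 0 z := by simp [hG, rpowC]
      rw [this]
      simpa using Or.inr hz0.le
    · rw [hG]
      simp only [norm_mul, norm_rpowC (succ_pos' n), Complex.ofReal_re]
      calc _ ≤ C * ((n : ℝ) + 1) ^ (-A - 2) * ((n : ℝ) + 1) ^ A := by gcongr; exact hz n hn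
        _ = C * ((n : ℝ) + 1) ^ (-2 : ℝ) := by
          rw [mul_assoc, ← Real.rpow_add (succ_pos' n)]; congr 2; ring
        _ ≤ _ := by gcongr; exact le_max_left _ _
  have hle : ∀ n : ℕ, ((n : ℝ) + 1) ^ (-2 : ℝ) ≤ 1 := fun n =>
    Real.rpow_le_one_of_one_le_of_nonpos (one_le_succ' n) (by norm_num)
  let Φ : ℂ → Bd := fun z => if h : ∃ C, ∀ n, ‖G n z‖ ≤ C then mkBd _ h else 0
  have hbd : ∀ z ∈ W, ∃ C, ∀ n, ‖G n z‖ ≤ C := by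
    intro z hz
    obtain ⟨C, hC⟩ := hb' z hz
    refine ⟨|C|, fun n => (hC.self_of_nhds n).trans ?_⟩
    calc _ ≤ |C| * ((n : ℝ) + 1) ^ (-2 : ℝ) := by gcongr; exact le_abs_self C
      _ ≤ |C| * 1 := by gcongr; exact hle n
      _ = |C| := mul_one _
  refine ⟨Φ, ?_, fun z hz n => by
    simp only [Φ]
    rw [dif_pos (hbd z hz), mkBd_apply]⟩
  intro p hp
  obtain ⟨C, hC⟩ := hb' p hp
  obtain ⟨O, hO, hOo, hpO⟩ := eventually_nhds_iff.1 (hC.and (hW.mem_nhds hp))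
  have hsm : Summable fun n : ℕ => C * ((n : ℝ) + 1) ^ (-2 : ℝ) := summable_inv_sq_succ.mul_left C
  have hbo : ∀ n z, z ∈ O → ‖G n z • deltaBd n‖ ≤ C * ((n : ℝ) + 1) ^ (-2 : ℝ) := by
    intro n z hz
    rw [norm_smul]
    calc _ ≤ ‖G n z‖ * 1 := by gcongr; exact norm_deltaBd_le n
      _ ≤ _ := by rw [mul_one]; exact (hO z hz).1 n
  have hdiff : DifferentiableOn ℂ (fun z => ∑' n, G n z • deltaBd n) O := by
    refine differentiableOn_tsum_of_summable_norm hsm (fun n => ?_) hOo hbo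
    refine DifferentiableOn.smul_const ?_ _
    exact ((hd n).mono fun z hz => (hO z hz).2).mul_const _
  have heq : ∀ z ∈ O, Φ z = ∑' n, G n z • deltaBd n := by
    intro z hz
    have hs : Summable fun n => G n z • deltaBd n :=
      Summable.of_norm_bounded hsm fun n => hbo n z hz
    ext m
    have h1 := (BoundedContinuousFunction.evalCLM ℂ m : Bd →L[ℂ] ℂ).map_tsum hs
    simp only [BoundedContinuousFunction.evalCLM_apply] at h1
    rw [h1, tsum_eq_single m]
    · simp [Φ, dif_pos (hbd z (hO z hz).2), deltaBd]
    · intro n hn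
      simp [deltaBd, hn.symm]
  exact (hdiff.congr heq).analyticAt (hOo.mem_nhds hpO)

/-! ### Taylor expansion of complex powers -/

/-- The Taylor coefficients of `x ↦ (1+x)^{-w}` at `0`. -/
noncomputable def tb : ℕ → ℂ → ℂ
  | 0, _ => 1
  | m + 1, w => -w / (m + 1) * tb m (w + 1)

lemma tb_succ (m : ℕ) (w : ℂ) : tb (m + 1) w = -(w + m) / (m + 1) * tb m w := by
  induction m generalizing w with
  | zero => simp [tb]
  | succ m ih =>
    rw [tb, ih (w + 1), tb]
    push_cast
    ring

lemma differentiable_tb (m : ℕ) : Differentiable ℂ (tb m) := by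
  induction m with
  | zero => exact differentiable_const 1
  | succ m ih =>
    have : tb (m + 1) = fun w : ℂ => -w / (m + 1) * tb m (w + 1) := by ext w; rw [tb]
    rw [this]
    have h2 : Differentiable ℂ fun w : ℂ => tb m (w + 1) := ih.comp (by fun_prop)
    fun_prop

/-- The Taylor remainder of order `M` of `x ↦ (1+x)^{-w}` at `0`. -/
noncomputable def trem (M : ℕ) (x : ℝ) (w : ℂ) : ℂ :=
  rpowC (1 + x) (-w) - ∑ m ∈ Finset.range M, tb m w * (x : ℂ) ^ m

lemma hasDerivAt_trem (M : ℕ) {x : ℝ} (hx : 0 < 1 + x) (w : ℂ) :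
    HasDerivAt (fun x => trem (M + 1) x w) (-w * trem M x (w + 1)) x := by
  have h1 : HasDerivAt (fun x : ℝ => rpowC (1 + x) (-w)) (-w * rpowC (1 + x) (-(w + 1))) x := by
    have hl : HasDerivAt (fun x : ℝ => Real.log (1 + x)) (1 + x)⁻¹ x := by
      simpa using ((hasDerivAt_id x).const_add 1).log hx.ne'
    have h2 := (hl.ofReal_comp.const_mul (-w)).cexp
    unfold rpowC at *
    convert h2 using 1
    have h3 : Complex.exp (-(Real.log (1 + x) : ℂ)) = (((1 + x)⁻¹ : ℝ) : ℂ) := by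
      rw [← Complex.ofReal_neg, ← Complex.ofReal_exp, Real.exp_neg, Real.exp_log hx]
    rw [neg_add, add_mul, Complex.exp_add, neg_one_mul, h3]
    ring
  have h2 : HasDerivAt (fun x : ℝ => ∑ m ∈ Finset.range (M + 1), tb m w * (x : ℂ) ^ m)
      (-w * ∑ m ∈ Finset.range M, tb m (w + 1) * (x : ℂ) ^ m) x := by
    have h3 : ∀ m ∈ Finset.range (M + 1), HasDerivAt (fun x : ℝ => tb m w * (x : ℂ) ^ m)
        (tb m w * (m * (x : ℂ) ^ (m - 1))) x := by
      intro m _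
      have h4 : HasDerivAt (fun x : ℝ => (x : ℂ)) 1 x := by
        simpa using (hasDerivAt_id x).ofReal_comp
      simpa using (h4.pow m).const_mul (tb m w)
    refine (HasDerivAt.fun_sum h3).congr_deriv ?_
    rw [Finset.sum_range_succ', Finset.mul_sum]
    simp only [Nat.cast_zero, zero_mul, mul_zero, add_zero]
    refine Finset.sum_congr rfl fun m _ => ?_
    rw [tb, Nat.add_sub_cancel]
    have : ((m : ℂ) + 1) ≠ 0 := Nat.cast_add_one_ne_zero m
    push_cast
    field_simp
  unfold trem
  rw [mul_sub]
  exact h1.sub h2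

/-- Taylor's estimate, uniform for `w` in a disc; by induction on the order, since the derivative in
`x` of a remainder is `-w` times the remainder of lower order at `w + 1`. -/
lemma trem_bound (M : ℕ) (ρ : ℝ) : ∃ C, ∀ w : ℂ, ‖w‖ ≤ ρ → ∀ x ∈ Set.Icc (-1 / 2 : ℝ) 1,
    ‖trem M x w‖ ≤ C * |x| ^ M := by
  induction M generalizing ρ with
  | zero =>
    refine ⟨Real.exp (ρ * Real.log 2), fun w hw x hx => ?_⟩
    have hx1 : (0 : ℝ) < 1 + x := by linarith [hx.1]
    have hl : |Real.log (1 + x)| ≤ Real.log 2 := by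
      rw [abs_le]
      constructor
      · rw [← Real.log_inv]
        exact Real.log_le_log (by norm_num) (by linarith [hx.1])
      · exact Real.log_le_log hx1 (by linarith [hx.2])
    simp only [trem, Finset.range_zero, Finset.sum_empty, sub_zero, pow_zero, mul_one]
    refine (Complex.norm_exp_le_exp_norm _).trans (Real.exp_le_exp.2 ?_)
    rw [norm_mul, norm_neg, Complex.norm_real, Real.norm_eq_abs]
    gcongr
    exact (norm_nonneg w).trans hw
  | succ M ih =>
    obtain ⟨C, hC⟩ := ih (ρ + 1)
    refine ⟨ρ * |C|, fun w hw x hx => ?_⟩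
    have hρ : 0 ≤ ρ := (norm_nonneg w).trans hw
    have h0 : trem (M + 1) 0 w = 0 := by
      rw [trem, Finset.sum_range_succ']
      simp [rpowC, tb]
    have hsub : Set.uIcc 0 x ⊆ Set.Icc (-1 / 2 : ℝ) 1 :=
      Set.uIcc_subset_Icc ⟨by norm_num, by norm_num⟩ hx
    have key := (convex_uIcc (0 : ℝ) x).norm_image_sub_le_of_norm_hasDerivWithin_le
      (f := fun x => trem (M + 1) x w) (f' := fun x => -w * trem M x (w + 1))
      (C := ρ * (|C| * |x| ^ M)) (fun y hy => (hasDerivAt_trem M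
        (by linarith [(hsub hy).1]) w).hasDerivWithinAt) (fun y hy => ?_)
      Set.left_mem_uIcc Set.right_mem_uIcc
    · simp only [h0, sub_zero] at key
      rw [Real.norm_eq_abs] at key
      refine key.trans (le_of_eq ?_)
      rw [pow_succ]; ring
    · rw [norm_mul, norm_neg]
      have hy' : |y| ≤ |x| := by
        have := Set.abs_sub_left_of_mem_uIcc hy
        simpa using this
      have h3 := hC (w + 1) ((norm_add_le _ _).trans (by simpa using hw)) y (hsub hy)
      calc _ ≤ ρ * (C * |y| ^ M) := by gcongr
        _ ≤ ρ * (|C| * |x| ^ M) := by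
          gcongr
          exact le_abs_self C

/-- Perturbations `y n = a/(n+1)` for `n ≥ 1` of the base `n+1`; the value at `n = 0` is
immaterial. -/
def AdmY (y : ℕ → ℝ) (a : ℝ) : Prop :=
  (∀ n, y n ∈ Set.Icc (-1 / 2 : ℝ) 1) ∧ |a| ≤ 1 ∧ ∀ n : ℕ, 1 ≤ n → y n = a / ((n : ℝ) + 1)

/-- Expansion of `(1 + y_n)^{-w}` in powers of `n + 1`, with remainder analytic in `w ∈ ℂ`. -/
lemma q_rem {y : ℕ → ℝ} {a : ℝ} (hy : AdmY y a) (M : ℕ) :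
    Rem ((M : ℝ) - 2) Set.univ fun n w => rpowC (1 + y n) (-w) -
      ∑ m ∈ Finset.range M, tb m w * (a : ℂ) ^ m * rpowC ((n : ℝ) + 1) (-(m : ℂ)) := by
  refine Rem.of_bound isOpen_univ (fun n => ?_) fun p _ => ?_
  · have h1 := differentiable_rpowC (1 + y n)
    have h2 : Differentiable ℂ fun w => rpowC (1 + y n) (-w) := h1.comp differentiable_neg
    have h3 := differentiable_tb
    refine Differentiable.differentiableOn ?_
    fun_prop
  · obtain ⟨C, hC⟩ := trem_bound M (‖p‖ + 1)
    refine ⟨|C|, ?_⟩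
    have : ∀ᶠ z in nhds p, ‖z‖ < ‖p‖ + 1 :=
      continuous_norm.continuousAt.eventually_lt continuousAt_const (by simp)
    filter_upwards [this] with w hw n hn
    have h1 : (rpowC (1 + y n) (-w) -
        ∑ m ∈ Finset.range M, tb m w * (a : ℂ) ^ m * rpowC ((n : ℝ) + 1) (-(m : ℂ))) =
        trem M (y n) w := by
      rw [trem]
      congr 1
      refine Finset.sum_congr rfl fun m _ => ?_
      rw [rpowC_neg_nat (succ_pos' n), mul_assoc, ← mul_pow, hy.2.2 n hn]
      push_cast
      rw [div_eq_mul_inv]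
    rw [h1]
    refine (hC w hw.le _ (hy.1 n)).trans ?_
    have h2 : |y n| ≤ ((n : ℝ) + 1)⁻¹ := by
      rw [hy.2.2 n hn, abs_div, abs_of_pos (succ_pos' n), ← one_div]
      exact div_le_div_of_nonneg_right hy.2.1 (succ_pos' n).le
    have h3 : ((n : ℝ) + 1) ^ (-((M : ℝ) - 2) - 2) = (((n : ℝ) + 1)⁻¹) ^ M := by
      rw [show (-((M : ℝ) - 2) - 2) = -(M : ℝ) by ring, Real.rpow_neg (succ_pos' n).le,
        Real.rpow_natCast, inv_pow]
    rw [h3]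
    calc _ ≤ |C| * |y n| ^ M := by gcongr; exact le_abs_self C
      _ ≤ _ := by gcongr

lemma pow_rem (A : ℝ) :
    Rem A {w : ℂ | A + 2 < w.re} fun n w => rpowC ((n : ℝ) + 1) (-w) := by
  have ho : IsOpen {w : ℂ | A + 2 < w.re} := isOpen_lt continuous_const Complex.continuous_re
  refine Rem.of_bound ho (fun n => ?_) fun p hp => ⟨1, ?_⟩
  · exact ((differentiable_rpowC _).comp differentiable_neg).differentiableOn
  · filter_upwards [ho.mem_nhds hp] with w hw n _
    rw [norm_rpowC (succ_pos' n), one_mul]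
    apply Real.rpow_le_rpow_of_exponent_le (one_le_succ' n)
    have : A + 2 < w.re := hw
    simp only [Complex.neg_re]; linarith

/-- The Taylor remainders of `(n+α+1)^{-w}` around the base `n+α`, normalised to vanish
at `n = 0`. -/
lemma shift_rem {A : ℝ} (hA : 0 ≤ A) {α : ℝ} (hα : 0 ≤ α) (M : ℕ) :
    Rem A {w : ℂ | A + 2 - M < w.re} fun n w =>
      if n = 0 then 0 else rpowC ((n : ℝ) + α) (-w) * trem M (1 / ((n : ℝ) + α)) w := by
  have ho : IsOpen {w : ℂ | A + 2 - M < w.re} := isOpen_lt continuous_const Complex.continuous_re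
  refine Rem.of_bound ho (fun n => ?_) fun p hp => ?_
  · by_cases hn : n = 0
    · simp only [hn, if_true]; exact differentiableOn_const _
    · simp only [hn, if_false]
      have h1 : ∀ b : ℝ, Differentiable ℂ fun w => rpowC b (-w) := fun b =>
        (differentiable_rpowC b).comp differentiable_neg
      have h3 := differentiable_tb
      unfold trem
      refine Differentiable.differentiableOn ?_
      fun_prop
  · obtain ⟨C, hC⟩ := trem_bound M (‖p‖ + 1)
    refine ⟨|C| * 2 ^ (A + 2), ?_⟩
    have : ∀ᶠ z in nhds p, ‖z‖ < ‖p‖ + 1 :=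
      continuous_norm.continuousAt.eventually_lt continuousAt_const (by simp)
    filter_upwards [this, ho.mem_nhds hp] with w hw hw2 n hn
    have hn1 : (1 : ℝ) ≤ n := by exact_mod_cast hn
    have hb1 : (1 : ℝ) ≤ n + α := by linarith
    have hb0 : (0 : ℝ) < n + α := by linarith
    have hx : 1 / ((n : ℝ) + α) ∈ Set.Icc (-1 / 2 : ℝ) 1 :=
      ⟨by have : 0 < 1 / ((n : ℝ) + α) := by positivity
          linarith, by rw [div_le_one hb0]; exact hb1⟩
    rw [if_neg (by omega), norm_mul, norm_rpowC hb0]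
    have h2 := hC w hw.le _ hx
    have h3 : |1 / ((n : ℝ) + α)| ^ M = ((n : ℝ) + α) ^ (-(M : ℝ)) := by
      rw [abs_of_pos (by positivity), one_div, inv_pow, Real.rpow_neg hb0.le, Real.rpow_natCast]
    rw [h3] at h2
    have hw2' : A + 2 - M < w.re := hw2
    calc _ ≤ ((n : ℝ) + α) ^ (-w).re * (|C| * ((n : ℝ) + α) ^ (-(M : ℝ))) := by
          gcongr
          exact h2.trans (by gcongr; exact le_abs_self C)
      _ = |C| * ((n : ℝ) + α) ^ ((-w).re + -(M : ℝ)) := by rw [Real.rpow_add hb0]; ring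
      _ ≤ |C| * ((n : ℝ) + α) ^ (-(A + 2)) := by
          gcongr |C| * ?_
          apply Real.rpow_le_rpow_of_exponent_le hb1
          simp only [Complex.neg_re]; linarith
      _ ≤ |C| * (((n : ℝ) + 1) / 2) ^ (-(A + 2)) := by
          gcongr |C| * ?_
          apply Real.rpow_le_rpow_of_nonpos (by positivity) (by linarith) (by linarith)
      _ = _ := by
          rw [Real.div_rpow (succ_pos' n).le (by norm_num), Real.rpow_neg (by norm_num : (0:ℝ) ≤ 2),
            div_inv_eq_mul, show -(A + 2) = -A - 2 by ring]
          ring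

/-! ### Asymptotic expansions and the translation formula -/

lemma eR_add (a b : ℝ) : eR (a + b) = eR a * eR b := by
  simp only [eR, ← Complex.exp_add]; congr 1; push_cast; ring

lemma norm_eR (a : ℝ) : ‖eR a‖ = 1 := by
  rw [eR, show (2 * Real.pi * Complex.I * a : ℂ) = ((2 * Real.pi * a : ℝ) : ℂ) * Complex.I by
    push_cast; ring, Complex.norm_exp_ofReal_mul_I]

lemma eR_eq_one_iff (a : ℝ) : eR a = 1 ↔ ∃ z : ℤ, a = z := by
  rw [eR, Complex.exp_eq_one_iff]
  have hp : (2 * Real.pi * Complex.I : ℂ) ≠ 0 := Complex.two_pi_I_ne_zero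
  refine exists_congr fun z => ?_
  rw [mul_comm (z : ℂ), mul_right_inj' hp]
  exact_mod_cast Iff.rfl

lemma eR_zero : eR 0 = 1 := by simp [eR]

lemma eR_neg_eq_one_iff (a : ℝ) : eR (-a) = 1 ↔ ∃ z : ℤ, a = z := by
  rw [← eR_eq_one_iff]
  have h : eR (-a) * eR a = 1 := by rw [← eR_add, neg_add_cancel, eR_zero]
  constructor <;> intro h' <;> simpa [h'] using h

lemma eR_bdd (a : ℝ) : ∃ C, ∀ n : ℕ, ‖eR (a * n)‖ ≤ C := ⟨1, fun _ => (norm_eR _).le⟩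

section
variable {E F : Type*} [NormedAddCommGroup E] [NormedSpace ℂ E] [NormedAddCommGroup F]
  [NormedSpace ℂ F]

/-- `Expn A V U u τ Y`: on `V ∩ U` the sequence `N ↦ Y N s` has an asymptotic expansion
`u N * ∑_{k < M} c_k(s) (N+1)^{-τ(s)-k} + O(N^{-A})` whose coefficients and remainder are
analytic on all of `V`. -/
def Expn (A : ℝ) (V U : Set E) (u : ℕ → ℂ) (τ : E → ℂ) (Y : ℕ → E → ℂ) : Prop :=
  ∃ (M : ℕ) (c : ℕ → E → ℂ) (g : ℕ → E → ℂ), (∀ k, AnalyticOnNhd ℂ (c k) V) ∧ Rem A V g ∧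
    ∀ s ∈ V, s ∈ U → ∀ N : ℕ, Y N s =
      u N * ∑ k ∈ Finset.range M, c k s * rpowC ((N : ℝ) + 1) (-(τ s + k)) + g N s

variable {A : ℝ} {V U : Set E} {u : ℕ → ℂ} {τ τ' : E → ℂ} {Y Y' : ℕ → E → ℂ}

/-- The number of explicit terms of an expansion may be increased at will, by zero terms. -/
lemma Expn.pad (h : Expn A V U u τ Y) : ∃ M₀ : ℕ, ∀ M, M₀ ≤ M →
    ∃ (c : ℕ → E → ℂ) (g : ℕ → E → ℂ), (∀ k, AnalyticOnNhd ℂ (c k) V) ∧ Rem A V g ∧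
    ∀ s ∈ V, s ∈ U → ∀ N : ℕ, Y N s =
      u N * ∑ k ∈ Finset.range M, c k s * rpowC ((N : ℝ) + 1) (-(τ s + k)) + g N s := by
  obtain ⟨M₀, c, g, hc, hg, H⟩ := h
  refine ⟨M₀, fun M hM => ⟨fun k s => if k < M₀ then c k s else 0, g, fun k => ?_, hg,
    fun s hs hu N => ?_⟩⟩
  · by_cases hk : k < M₀
    · simpa [hk] using hc k
    · simpa [hk] using analyticOnNhd_const
  · beta_reduce
    rw [H s hs hu N]
    congr 2
    rw [← Finset.sum_subset (Finset.range_mono hM)]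
    · exact Finset.sum_congr rfl fun k hk => by simp [Finset.mem_range.1 hk]
    · intro k _ hk
      simp [(by simpa using hk : M₀ ≤ k)]

lemma Expn.congr (h : Expn A V U u τ Y) (H : ∀ s ∈ V, s ∈ U → ∀ N, Y' N s = Y N s) :
    Expn A V U u τ Y' := by
  obtain ⟨M, c, g, hc, hg, h⟩ := h
  exact ⟨M, c, g, hc, hg, fun s hs hu N => by rw [H s hs hu, h s hs hu]⟩

lemma Expn.of_rem (h : Rem A V Y) : Expn A V U u τ Y :=
  ⟨0, fun _ _ => 0, Y, fun _ => analyticOnNhd_const, h, by simp⟩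

lemma Expn.add (h : Expn A V U u τ Y) (h' : Expn A V U u τ Y') :
    Expn A V U u τ fun N s => Y N s + Y' N s := by
  obtain ⟨M₁, h⟩ := h.pad
  obtain ⟨M₂, h'⟩ := h'.pad
  obtain ⟨c, g, hc, hg, H⟩ := h (max M₁ M₂) (le_max_left _ _)
  obtain ⟨c', g', hc', hg', H'⟩ := h' (max M₁ M₂) (le_max_right _ _)
  refine ⟨max M₁ M₂, fun k s => c k s + c' k s, fun N s => g N s + g' N s,
    fun k => (hc k).add (hc' k), hg.add hg', fun s hs hu N => ?_⟩
  beta_reduce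
  rw [H s hs hu, H' s hs hu]
  simp only [add_mul, Finset.sum_add_distrib]
  ring

lemma Expn.sum {ι : Type*} (I : Finset ι) {G : ι → ℕ → E → ℂ}
    (h : ∀ i ∈ I, Expn A V U u τ (G i)) : Expn A V U u τ fun n s => ∑ i ∈ I, G i n s := by
  classical
  induction I using Finset.induction_on with
  | empty => simpa using Expn.of_rem Rem.zero
  | insert a I ha ih =>
    refine ((h a (by simp)).add (ih fun i hi => h i (by simp [hi]))).congr fun s _ _ n => ?_
    rw [Finset.sum_insert ha]

lemma Expn.smul {b : E → ℂ} (hb : AnalyticOnNhd ℂ b V) (h : Expn A V U u τ Y) :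
    Expn A V U u τ fun N s => b s * Y N s := by
  obtain ⟨M, c, g, hc, hg, h⟩ := h
  refine ⟨M, fun k s => b s * c k s, fun N s => b s * g N s, fun k => hb.mul (hc k),
    hg.smul hb, fun s hs hu N => ?_⟩
  beta_reduce
  rw [h s hs hu, mul_add]
  simp only [mul_assoc, ← Finset.mul_sum]
  ring

/-- An expansion with leading exponent `τ + m`, `m ∈ ℕ`, is one with leading exponent `τ`. -/
lemma Expn.shift (m : ℕ) (h : Expn A V U u τ' Y) (hτ : ∀ s ∈ V, τ' s = τ s + m) :
    Expn A V U u τ Y := by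
  obtain ⟨M, c, g, hc, hg, h⟩ := h
  refine ⟨m + M, fun k s => if k < m then 0 else c (k - m) s, g, fun k => ?_, hg,
    fun s hs hu N => ?_⟩
  · by_cases hk : k < m
    · simpa [hk] using analyticOnNhd_const
    · simpa [hk] using hc (k - m)
  · rw [h s hs hu, Finset.sum_range_add]
    congr 2
    rw [Finset.sum_eq_zero (s := Finset.range m), zero_add]
    · refine Finset.sum_congr rfl fun k _ => ?_
      beta_reduce
      rw [if_neg (by omega), Nat.add_sub_cancel_left, hτ s hs]
      congr 3
      push_cast; ring
    · intro k hk
      simp [Finset.mem_range.1 hk]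

lemma Expn.comp {W U' : Set F} {σ : F → ℂ} {Y : ℕ → F → ℂ} {φ : E → F}
    (h : Expn A W U' u σ Y) (hφ : AnalyticOnNhd ℂ φ V) (hm : ∀ s ∈ V, φ s ∈ W)
    (hm' : ∀ s ∈ V, s ∈ U → φ s ∈ U') :
    Expn A V U u (fun s => σ (φ s)) fun N s => Y N (φ s) := by
  obtain ⟨M, c, g, hc, hg, h⟩ := h
  exact ⟨M, fun k s => c k (φ s), fun N s => g N (φ s), fun k => (hc k).comp hφ hm,
    hg.comp hφ hm, fun s hs hu N => h _ (hm s hs) (hm' s hs hu) N⟩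

/-- A power `(n+1)^{-w} (1 + y_n)^{-x}` of a perturbed base has an expansion in powers of
`n+1`, to any order. -/
lemma pow_q_expn {y : ℕ → ℝ} {a : ℝ} (hy : AdmY y a) {w x : E → ℂ} (hw : AnalyticOnNhd ℂ w V)
    (hx : AnalyticOnNhd ℂ x V) {R : ℝ} (hR : ∀ s ∈ V, -R < (w s).re)
    (hu : ∃ C, ∀ n, ‖u n‖ ≤ C) :
    Expn A V U u w fun n s => u n * (rpowC ((n : ℝ) + 1) (-w s) * rpowC (1 + y n) (-x s)) := by
  obtain ⟨M, hM⟩ := exists_nat_ge (A + R + 4)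
  have h1 := (q_rem hy M).comp hx fun _ _ => Set.mem_univ _
  have h2 := (pow_rem (-R - 2)).comp (V := V) hw fun s hs => by
    have := hR s hs
    simp only [Set.mem_ofPred_eq]; linarith
  have h3 := ((h2.mul h1).mono (A' := A) (by linarith)).bmul hu
  refine ⟨M, fun k s => tb k (x s) * (a : ℂ) ^ k, _, fun k => ?_, h3, fun s _ _ n => ?_⟩
  · refine AnalyticOnNhd.mul (fun s hs => ?_) analyticOnNhd_const
    exact AnalyticAt.fun_comp ((differentiable_tb k).analyticAt _) (hx s hs)
  · have e : ∑ k ∈ Finset.range M, tb k (x s) * (a : ℂ) ^ k * rpowC ((n : ℝ) + 1) (-(w s + k)) =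
        rpowC ((n : ℝ) + 1) (-w s) * ∑ k ∈ Finset.range M, tb k (x s) * (a : ℂ) ^ k *
          rpowC ((n : ℝ) + 1) (-(k : ℂ)) := by
      rw [Finset.mul_sum]
      refine Finset.sum_congr rfl fun k _ => ?_
      rw [neg_add, rpowC_add]
      ring
    rw [e]; ring

/-- The crude case of `q_rem`: no explicit term, remainder `O(n^2)`. -/
lemma q_bdd_rem {y : ℕ → ℝ} {a : ℝ} (hy : AdmY y a) :
    Rem (-2) Set.univ fun n w => rpowC (1 + y n) (-w) := by
  have := q_rem hy 0
  simpa using this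

end

/-- The base `n + α` as a perturbation of `n + 1`. -/
noncomputable def yIn (α : ℝ) (n : ℕ) : ℝ := if n = 0 then 0 else (α - 1) / ((n : ℝ) + 1)

/-- The base `n + 1 + α` as a perturbation of `n + 1`. -/
noncomputable def yOut (α : ℝ) (n : ℕ) : ℝ := α / ((n : ℝ) + 1)

lemma admY_yIn {α : ℝ} (hα : 0 ≤ α) (hα1 : α ≤ 1) : AdmY (yIn α) (α - 1) := by
  refine ⟨fun n => ?_, by rw [abs_le]; constructor <;> linarith, fun n hn => by
    rw [yIn, if_neg (by omega)]⟩
  rcases Nat.eq_zero_or_pos n with rfl | hn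
  · simp [yIn]; norm_num
  · have hn1 : (1 : ℝ) ≤ n := by exact_mod_cast hn
    rw [yIn, if_neg (by omega)]
    constructor
    · rw [div_le_div_iff₀ (by norm_num) (by positivity)]; nlinarith
    · rw [div_le_one (by positivity)]; linarith

lemma admY_yOut {α : ℝ} (hα : 0 ≤ α) (hα1 : α ≤ 1) : AdmY (yOut α) α := by
  refine ⟨fun n => ?_, by rw [abs_le]; constructor <;> linarith, fun n hn => rfl⟩
  have : 0 ≤ yOut α n := div_nonneg hα (succ_pos' n).le
  refine ⟨by linarith, ?_⟩
  rw [yOut, div_le_one (succ_pos' n)]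
  linarith [one_le_succ' n]

lemma rpowC_in {α : ℝ} (hα : 0 ≤ α) (hα1 : α ≤ 1) {n : ℕ} (hn : 1 ≤ n)
    (z : ℂ) :
    rpowC ((n : ℝ) + α) z = rpowC ((n : ℝ) + 1) z * rpowC (1 + yIn α n) z := by
  have h1 := ((admY_yIn hα hα1).1 n).1
  rw [← rpowC_mul_base (succ_pos' n) (by linarith)]
  congr 1
  rw [yIn, if_neg (by omega)]
  field_simp
  ring

lemma rpowC_out {α : ℝ} (hα : 0 ≤ α) (hα1 : α ≤ 1) (n : ℕ) (z : ℂ) :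
    rpowC ((n : ℝ) + 1 + α) z = rpowC ((n : ℝ) + 1) z * rpowC (1 + yOut α n) z := by
  have h1 := ((admY_yOut hα hα1).1 n).1
  rw [← rpowC_mul_base (succ_pos' n) (by linarith)]
  congr 1
  rw [yOut]
  field_simp

/-- The tail `∑_{n > N} e(λ n) (n+α)^{-w}` of the Lerch zeta function. -/
noncomputable def zT (lam α : ℝ) (N : ℕ) (w : ℂ) : ℂ :=
  tailSum (fun n => eR (lam * n) * rpowC ((n : ℝ) + α) (-w)) N

open scoped Classical in
/-- `1` if `λ` is an integer, `0` otherwise. -/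
noncomputable def eps (lam : ℝ) : ℕ := if ∃ z : ℤ, lam = z then 1 else 0

open scoped Classical in
/-- The factor removing the pole of the Lerch zeta function: `w - 1` if `λ` is an integer, and
`1` otherwise. -/
noncomputable def dz (lam : ℝ) (w : ℂ) : ℂ := if ∃ z : ℤ, lam = z then w - 1 else 1

lemma differentiable_dz (lam : ℝ) : Differentiable ℂ (dz lam) := by
  unfold dz
  by_cases h : ∃ z : ℤ, lam = z <;> simp only [h, if_true, if_false] <;> fun_prop

lemma zT_summable {lam α : ℝ} (hα : 0 ≤ α) {w : ℂ} (hw : 1 < w.re) (N : ℕ) :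
    Summable fun k : ℕ => eR (lam * (N + 1 + k : ℕ)) *
      rpowC (((N + 1 + k : ℕ) : ℝ) + α) (-w) := by
  have h1 : Summable fun k : ℕ => ((N + 1 + k : ℕ) : ℝ) ^ (-w.re) := by
    have := (summable_nat_add_iff (N + 1)).2 (Real.summable_nat_rpow.2 (by linarith : -w.re < -1))
    refine this.congr fun k => ?_
    rw [add_comm k]
  refine Summable.of_norm_bounded h1 fun k => ?_
  have hp : (0 : ℝ) < ((N + 1 + k : ℕ) : ℝ) := by exact_mod_cast (by omega : 0 < N + 1 + k)
  rw [norm_mul, norm_eR, one_mul, norm_rpowC (by linarith)]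
  exact Real.rpow_le_rpow_of_nonpos hp (by linarith) (by simp only [Complex.neg_re]; linarith)

lemma tailSum_telescope {u : ℕ → ℂ} (hu : Filter.Tendsto u Filter.atTop (nhds 0)) {h : ℕ → ℂ}
    (hh : ∀ n, h (n + 1) = u n - u (n + 1)) {N : ℕ} (hs : Summable fun k => h (N + 1 + k)) :
    tailSum h N = u N := by
  have h1 := hs.hasSum.tendsto_sum_nat
  have h2 : ∀ K, ∑ k ∈ Finset.range K, h (N + 1 + k) = u N - u (N + K) := by
    intro K
    have h3 := Finset.sum_range_sub' (fun k => u (N + k)) K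
    simp only [add_zero] at h3
    rw [← h3]
    refine Finset.sum_congr rfl fun k _ => ?_
    rw [show N + 1 + k = N + k + 1 by ring, hh, add_assoc]
  simp only [h2] at h1
  have h3 : Filter.Tendsto (fun K => u N - u (N + K)) Filter.atTop (nhds (u N - 0)) := by
    refine tendsto_const_nhds.sub (hu.comp ?_)
    exact Filter.tendsto_atTop_mono (fun K => Nat.le_add_left K N) Filter.tendsto_id
  rw [sub_zero] at h3
  exact tendsto_nhds_unique h1 h3

/-- The Taylor remainder of `(n+α+1)^{-v}` around `n+α`, for `n ≥ 1`. -/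
noncomputable def shiftRem (α : ℝ) (M : ℕ) (n : ℕ) (v : ℂ) : ℂ :=
  if n = 0 then 0 else rpowC ((n : ℝ) + α) (-v) * trem M (1 / ((n : ℝ) + α)) v

lemma shift_taylor {α : ℝ} (hα : 0 ≤ α) (M : ℕ) {n : ℕ} (hn : 1 ≤ n) (v : ℂ) :
    rpowC ((n : ℝ) + 1 + α) (-v) =
      ∑ m ∈ Finset.range M, tb m v * rpowC ((n : ℝ) + α) (-(v + m)) + shiftRem α M n v := by
  have hn1 : (1 : ℝ) ≤ n := by exact_mod_cast hn
  have hb : (0 : ℝ) < n + α := by linarith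
  rw [shiftRem, if_neg (by omega), trem, mul_sub, ← rpowC_mul_base hb (by positivity),
    Finset.mul_sum]
  have e1 : ((n : ℝ) + α) * (1 + 1 / ((n : ℝ) + α)) = (n : ℝ) + 1 + α := by
    field_simp; ring
  have e2 : ∀ m : ℕ, tb m v * rpowC ((n : ℝ) + α) (-(v + m)) =
      rpowC ((n : ℝ) + α) (-v) * (tb m v * ((1 / ((n : ℝ) + α) : ℝ) : ℂ) ^ m) := by
    intro m
    rw [neg_add, rpowC_add, rpowC_neg_nat hb]
    push_cast
    rw [one_div]; ring
  rw [e1, Finset.sum_congr rfl fun m _ => e2 m]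
  ring

lemma tb_zero (w : ℂ) : tb 0 w = 1 := rfl

/-- The translation formula: telescoping `e(λ n) (n+1+α)^{-v}` over `n > N` and expanding
the differences around `n + α`. When `λ` is an integer, the divergent sum `zT lam α N v` comes
with the coefficient zero. -/
lemma translation {lam α : ℝ} (hα : 0 ≤ α) {v : ℂ} (hv : 0 < v.re)
    (hv' : 1 < v.re ∨ eR (-lam) = 1) {M : ℕ} (hM : 3 ≤ M) (N : ℕ) :
    eR (lam * N) * rpowC ((N : ℝ) + 1 + α) (-v) = (eR (-lam) - 1) * zT lam α N v -
      ∑ m ∈ Finset.range M, tb (m + 1) v * zT lam α N (v + m + 1) -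
      tailSum (fun n => eR (lam * n) * shiftRem α (M + 1) n v) N := by
  set u : ℕ → ℂ := fun n => eR (lam * n) * rpowC ((n : ℝ) + 1 + α) (-v) with hu
  have hu0 : Filter.Tendsto u Filter.atTop (nhds 0) := by
    have h1 : Filter.Tendsto (fun n : ℕ => (n : ℝ) + 1 + α) Filter.atTop Filter.atTop := by
      refine Filter.tendsto_atTop_mono (fun n => ?_) tendsto_natCast_atTop_atTop
      linarith
    have h2 := (tendsto_rpow_neg_atTop hv).comp h1
    refine squeeze_zero_norm (fun n => le_of_eq ?_) h2
    rw [hu]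
    simp only [Function.comp]
    rw [norm_mul, norm_eR, one_mul, norm_rpowC (by positivity), Complex.neg_re]
  set h : ℕ → ℂ := fun n => (eR (-lam) - 1) * (eR (lam * n) * rpowC ((n : ℝ) + α) (-v)) -
    ∑ m ∈ Finset.range M, tb (m + 1) v * (eR (lam * n) * rpowC ((n : ℝ) + α) (-(v + m + 1))) -
    eR (lam * n) * shiftRem α (M + 1) n v with hh
  have hdiff : ∀ n, h (n + 1) = u n - u (n + 1) := by
    intro n
    have e1 := shift_taylor hα (M + 1) (Nat.le_add_left 1 n) v
    have e2 : eR (lam * n) = eR (-lam) * eR (lam * (n + 1 : ℕ)) := by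
      rw [← eR_add]; congr 1; push_cast; ring
    simp only [hu, hh]
    rw [e1, Finset.sum_range_succ', e2]
    simp only [tb_zero, Nat.cast_zero, add_zero, one_mul, mul_add, Finset.mul_sum]
    rw [show ((n + 1 : ℕ) : ℝ) + α = (n : ℝ) + 1 + α by push_cast; ring]
    rw [Finset.sum_congr rfl fun m _ => (by push_cast; ring_nf :
      tb (m + 1) v * (eR (lam * ((n + 1 : ℕ) : ℝ)) * rpowC ((n : ℝ) + 1 + α) (-(v + m + 1))) =
      eR (lam * ((n + 1 : ℕ) : ℝ)) * (tb (m + 1) v *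
        rpowC ((n : ℝ) + 1 + α) (-(v + ((m + 1 : ℕ) : ℂ)))))]
    ring
  have s1 : Summable fun k : ℕ => (eR (-lam) - 1) *
      (eR (lam * (N + 1 + k : ℕ)) * rpowC (((N + 1 + k : ℕ) : ℝ) + α) (-v)) := by
    rcases hv' with h1 | h1
    · exact (zT_summable hα h1 N).mul_left _
    · simp [h1]
  have s2 : ∀ m ∈ Finset.range M, Summable fun k : ℕ => tb (m + 1) v *
      (eR (lam * (N + 1 + k : ℕ)) * rpowC (((N + 1 + k : ℕ) : ℝ) + α) (-(v + m + 1))) := by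
    intro m _
    refine (zT_summable hα ?_ N).mul_left _
    simp only [Complex.add_re, Complex.natCast_re, Complex.one_re]
    linarith [(Nat.cast_nonneg m : (0 : ℝ) ≤ m)]
  have s3 : Summable fun k : ℕ => eR (lam * (N + 1 + k : ℕ)) *
      shiftRem α (M + 1) (N + 1 + k) v := by
    have h1 := (shift_rem (A := 2) (by norm_num) hα (M + 1)).bmul (eR_bdd lam)
    refine h1.summable le_rfl (s := v) ?_ N
    have : (3 : ℝ) ≤ M := by exact_mod_cast hM
    simp only [Set.mem_ofPred_eq]
    push_cast
    linarith
  have key := tailSum_telescope hu0 hdiff (N := N) ((s1.sub (summable_sum s2)).sub s3)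
  rw [show eR (lam * N) * rpowC ((N : ℝ) + 1 + α) (-v) = u N from rfl, ← key]
  simp only [tailSum, hh, zT]
  rw [(s1.sub (summable_sum s2)).tsum_sub s3, s1.tsum_sub (summable_sum s2),
    Summable.tsum_finsetSum s2, tsum_mul_left]
  simp only [tsum_mul_left]

/-! ### Tails of the Lerch zeta function -/

lemma Expn.subset {E : Type*} [NormedAddCommGroup E] [NormedSpace ℂ E] {A : ℝ} {V V' U : Set E}
    {u : ℕ → ℂ} {τ : E → ℂ} {Y : ℕ → E → ℂ} (hV : V' ⊆ V) (h : Expn A V U u τ Y) :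
    Expn A V' U u τ Y := by
  obtain ⟨M, c, g, hc, hg, H⟩ := h
  exact ⟨M, c, g, fun k => (hc k).mono hV, hg.subset hV, fun s hs => H s (hV hs)⟩

lemma analyticOnNhd_of_diff {f : ℂ → ℂ} (hf : Differentiable ℂ f) (V : Set ℂ) :
    AnalyticOnNhd ℂ f V := fun s _ => hf.analyticAt s

/-- The recurrence on which the continuation of the Lerch zeta function and its tails rests: the
tail at `w` is expressed by boundary terms, tails at `w + 1, w + 2, …`, and a remainder. -/
lemma zeta_rec (lam : ℝ) {α : ℝ} (hα : 0 ≤ α) (hα1 : α ≤ 1) {A : ℝ} (hA : 0 ≤ A) (B : ℝ) :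
    ∃ (M : ℕ) (β : ℕ → ℂ → ℂ) (bd g : ℕ → ℂ → ℂ), (∀ m, Differentiable ℂ (β m)) ∧
      Expn A {w : ℂ | B < w.re} {w : ℂ | 1 < w.re} (fun n => eR (lam * n))
        (fun w => w - eps lam) bd ∧
      Rem A {w : ℂ | B < w.re} g ∧ ∀ w : ℂ, B < w.re → 1 < w.re → ∀ N : ℕ,
        dz lam w * zT lam α N w = bd N w +
          ∑ m ∈ Finset.range M, β m w * (dz lam (w + m + 1) * zT lam α N (w + m + 1)) +
          g N w := by
  have hd := differentiable_tb
  obtain ⟨M, hM⟩ := exists_nat_ge (max 3 (A + 5 - B))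
  have hM1 : (3 : ℝ) ≤ M := (le_max_left _ _).trans hM
  have hM2 : A + 5 - B ≤ M := (le_max_right _ _).trans hM
  have hM3 : 3 ≤ M := by exact_mod_cast hM1
  by_cases hl : ∃ z : ℤ, lam = z
  · have hκ : eR (-lam) = 1 := (eR_neg_eq_one_iff lam).2 hl
    have hφ : ∀ V : Set ℂ, AnalyticOnNhd ℂ (fun w : ℂ => w - 1) V := fun V =>
      analyticOnNhd_of_diff (by fun_prop) V
    have hbd := pow_q_expn (A := A) (V := {w : ℂ | B < w.re}) (U := {w : ℂ | 1 < w.re})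
      (u := fun n => eR (lam * n)) (admY_yOut hα hα1) (hφ _) (hφ _) (R := 1 - B)
      (fun s hs => by
        simp only [Set.mem_ofPred_eq, sub_re, one_re] at hs ⊢; linarith) (eR_bdd lam)
    have hg := (((shift_rem (A := A + 2) (by linarith) hα (M + 2)).comp (hφ {w | B < w.re})
      (fun s hs => by
        simp only [Set.mem_ofPred_eq, sub_re, one_re] at hs ⊢
        push_cast; linarith)).bmul (eR_bdd lam)).tail (by linarith)
    rw [show A + 2 - 2 = A by ring] at hg
    refine ⟨M, fun m w => -(tb (m + 1) (w - 1) / (m + 2)),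
      fun N w => eR (lam * N) * rpowC ((N : ℝ) + 1 + α) (-(w - 1)), _, fun m => ?_, ?_, hg, ?_⟩
    · have := hd (m + 1)
      fun_prop
    · have e : (fun w : ℂ => w - (eps lam : ℂ)) = fun w => w - 1 := by
        simp [eps, hl]
      rw [e]
      refine hbd.congr fun w _ _ N => ?_
      rw [rpowC_out hα hα1]
    · intro w _ hw N
      have key := translation (lam := lam) hα (v := w - 1) (by simpa using hw) (Or.inr hκ)
        (M := M + 1) (by omega) N
      rw [hκ, Finset.sum_range_succ'] at key
      have e0 : tb (0 + 1) (w - 1) = -(w - 1) := by simp [tb]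
      have e1 : (w - 1 + ((0 : ℕ) : ℂ) + 1) = w := by push_cast; ring
      rw [e0, e1] at key
      have e2 : ∀ m ∈ Finset.range M, tb (m + 1 + 1) (w - 1) *
          zT lam α N (w - 1 + ((m + 1 : ℕ) : ℂ) + 1) = (fun m w => -(tb (m + 1) (w - 1) / (m + 2)))
          m w * (dz lam (w + m + 1) * zT lam α N (w + m + 1)) := by
        intro m _
        have h2 : (m : ℂ) + 2 ≠ 0 := by exact_mod_cast (by omega : m + 2 ≠ 0)
        rw [tb_succ (m + 1), show (w - 1 + ((m + 1 : ℕ) : ℂ) + 1) = w + m + 1 by push_cast; ring]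
        simp only [dz, hl, if_true]
        push_cast
        rw [show (m : ℂ) + 1 + 1 = m + 2 by ring]
        field_simp
        ring
      rw [Finset.sum_congr rfl e2] at key
      have e3 : dz lam w = w - 1 := by simp [dz, hl]
      rw [e3]
      beta_reduce
      rw [key]
      simp only [shiftRem]
      ring
  · have hκ : eR (-lam) - 1 ≠ 0 := fun h => hl ((eR_neg_eq_one_iff lam).1 (sub_eq_zero.1 h))
    have hid : ∀ V : Set ℂ, AnalyticOnNhd ℂ (fun w : ℂ => w) V := fun V =>
      analyticOnNhd_of_diff (by fun_prop) V
    have hbd := (pow_q_expn (A := A) (V := {w : ℂ | B < w.re}) (U := {w : ℂ | 1 < w.re})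
      (u := fun n => eR (lam * n)) (admY_yOut hα hα1) (hid _) (hid _) (R := -B)
      (fun s hs => by simpa using hs) (eR_bdd lam)).smul
        (analyticOnNhd_const (v := (eR (-lam) - 1)⁻¹))
    have hg := ((((shift_rem (A := A + 2) (by linarith) hα (M + 1)).subset (V' := {w | B < w.re})
      (fun s hs => by
        simp only [Set.mem_ofPred_eq] at hs ⊢
        push_cast; linarith)).bmul (eR_bdd lam)).tail (by linarith)).smul
        (analyticOnNhd_const (v := (eR (-lam) - 1)⁻¹))
    rw [show A + 2 - 2 = A by ring] at hg
    refine ⟨M, fun m w => (eR (-lam) - 1)⁻¹ * tb (m + 1) w,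
      fun N w => (eR (-lam) - 1)⁻¹ * (eR (lam * N) * rpowC ((N : ℝ) + 1 + α) (-w)), _,
      fun m => ?_, ?_, hg, ?_⟩
    · have := hd (m + 1)
      fun_prop
    · have e : (fun w : ℂ => w - (eps lam : ℂ)) = fun w => w := by
        simp [eps, hl]
      rw [e]
      refine hbd.congr fun w _ _ N => ?_
      rw [rpowC_out hα hα1]
    · intro w _ hw N
      have key := translation (lam := lam) hα (v := w) (by linarith) (Or.inl hw) hM3 N
      have e3 : ∀ w, dz lam w = 1 := by simp [dz, hl]
      simp only [e3, one_mul, mul_assoc, ← Finset.mul_sum, ← mul_add]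
      rw [eq_inv_mul_iff_mul_eq₀ hκ, key]
      simp only [shiftRem]
      ring

/-- The tails of the Lerch zeta function, multiplied by `w - 1` when `λ` is an integer, have an
asymptotic expansion whose coefficients and remainder are analytic on any half plane. -/
theorem zeta_expn (lam : ℝ) {α : ℝ} (hα : 0 ≤ α) (hα1 : α ≤ 1) {A : ℝ} (hA : 0 ≤ A) (B : ℝ) :
    Expn A {w : ℂ | B < w.re} {w : ℂ | 1 < w.re} (fun n => eR (lam * n))
      (fun w => w - eps lam) fun N w => dz lam w * zT lam α N w := by
  -- Induction on `l`, moving the half plane to the left by one unit at a time; for `l = 0` the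
  -- tail itself is small enough to count as a remainder.
  have main : ∀ l : ℕ, Expn A {w : ℂ | A + 7 - l < w.re} {w : ℂ | 1 < w.re}
      (fun n => eR (lam * n)) (fun w => w - eps lam) fun N w => dz lam w * zT lam α N w := by
    intro l
    induction l with
    | zero =>
      apply Expn.of_rem
      refine Rem.smul (analyticOnNhd_of_diff (differentiable_dz lam) _) ?_
      have h1 := (pow_rem (A + 4)).mul ((q_bdd_rem (admY_yIn hα hα1)).subset (Set.subset_univ _))
      have h2 := ((h1.bmul (eR_bdd lam)).tail (by linarith)).mono (A' := A) (by linarith)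
      refine (h2.subset fun s hs => ?_).congr fun s _ n => ?_
      · simp only [Set.mem_ofPred_eq, Nat.cast_zero] at hs ⊢; linarith
      · refine tailSum_congr (fun k hk => ?_) n
        rw [rpowC_in hα hα1 hk]
    | succ l ih =>
      obtain ⟨M, β, bd, g, hβ, hbd, hg, H⟩ := zeta_rec lam hα hα1 hA (A + 7 - (l + 1 : ℕ))
      have h1 : ∀ m ∈ Finset.range M, Expn A {w : ℂ | A + 7 - (l + 1 : ℕ) < w.re}
          {w : ℂ | 1 < w.re} (fun n => eR (lam * n)) (fun w => w - eps lam)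
          fun N w => β m w * (dz lam (w + m + 1) * zT lam α N (w + m + 1)) := by
        intro m _
        refine Expn.smul (analyticOnNhd_of_diff (hβ m) _) ?_
        have hm : (0 : ℝ) ≤ m := Nat.cast_nonneg m
        refine (ih.comp (φ := fun w : ℂ => w + (m : ℂ) + 1)
          (analyticOnNhd_of_diff (by fun_prop) _) (fun s hs => ?_) fun s _ hs => ?_).shift (m + 1)
          fun s _ => ?_
        · simp only [Set.mem_ofPred_eq, add_re, natCast_re, one_re] at hs ⊢
          push_cast at hs; linarith
        · simp only [Set.mem_ofPred_eq, add_re, natCast_re, one_re] at hs ⊢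
          linarith
        · push_cast; ring
      exact ((hbd.add (Expn.sum _ h1)).add (Expn.of_rem hg)).congr fun w hw hw' N => H w hw hw' N
  obtain ⟨l, hl⟩ := exists_nat_ge (A + 7 - B)
  refine (main l).subset fun w hw => ?_
  simp only [Set.mem_ofPred_eq] at hw ⊢
  linarith

/-! ### Expansions under multiplication by powers and tail summation -/

section
variable {E : Type*} [NormedAddCommGroup E] [NormedSpace ℂ E] {A R : ℝ} {V U : Set E}

/-- Multiplying a sequence with an expansion by `e(λ n) (n+α)^{-x}`. -/
lemma Expn.mul_pow {μ lam α : ℝ} (hα : 0 ≤ α) (hα1 : α ≤ 1) {x τ : E → ℂ} {Y : ℕ → E → ℂ}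
    (hx : AnalyticOnNhd ℂ x V) (hτ : AnalyticOnNhd ℂ τ V) (hxR : ∀ s ∈ V, ‖x s‖ ≤ R)
    (hτR : ∀ s ∈ V, ‖τ s‖ ≤ R) (h : Expn (A + R + 5) V U (fun n => eR (μ * n)) τ Y) :
    Expn A V U (fun n => eR ((μ + lam) * n)) (fun s => τ s + x s)
      fun n s => eR (lam * n) * (rpowC ((n : ℝ) + 1) (-x s) * rpowC (1 + yIn α n) (-x s)) *
        Y n s := by
  obtain ⟨M, c, g, hc, hg, H⟩ := h
  have hxre : ∀ s ∈ V, -R ≤ (x s).re := fun s hs =>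
    (neg_le_neg (hxR s hs)).trans (neg_le_of_abs_le (abs_re_le_norm _))
  have hτre : ∀ s ∈ V, -R ≤ (τ s).re := fun s hs =>
    (neg_le_neg (hτR s hs)).trans (neg_le_of_abs_le (abs_re_le_norm _))
  have h1 : ∀ k ∈ Finset.range M, Expn A V U (fun n => eR ((μ + lam) * n))
      (fun s => τ s + x s) fun n s => c k s * (eR ((μ + lam) * n) *
        (rpowC ((n : ℝ) + 1) (-(τ s + x s + k)) * rpowC (1 + yIn α n) (-x s))) := by
    intro k _
    refine Expn.smul (hc k) ?_
    refine (pow_q_expn (A := A) (V := V) (U := U) (u := fun n => eR ((μ + lam) * n))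
      (admY_yIn hα hα1) (w := fun s => τ s + x s + k) (x := x)
      ((hτ.add hx).add analyticOnNhd_const) hx (R := 2 * R + 1) (fun s hs => ?_)
      (eR_bdd _)).shift k fun s _ => rfl
    have := hxre s hs
    have := hτre s hs
    have hk : (0 : ℝ) ≤ k := Nat.cast_nonneg k
    simp only [add_re, natCast_re]
    linarith
  have h2 := (pow_rem (-R - 3)).comp (V := V) hx fun s hs => by
    have := hxre s hs
    simp only [Set.mem_ofPred_eq]; linarith
  have h3 := (q_bdd_rem (admY_yIn hα hα1)).comp (V := V) hx fun s _ => Set.mem_univ _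
  have h4 := (((h2.mul h3).bmul (eR_bdd lam)).mul hg).mono (A' := A) (by linarith)
  refine ((Expn.sum _ h1).add (Expn.of_rem h4)).congr fun s hs hu n => ?_
  rw [H s hs hu, mul_add]
  congr 1
  rw [← mul_assoc, Finset.mul_sum]
  refine Finset.sum_congr rfl fun k _ => ?_
  rw [show -(τ s + x s + k) = -(τ s + k) + -x s by ring, rpowC_add, add_mul μ lam, eR_add]
  ring

/-- Summation of a sequence with an expansion over `n > N`, after clearing finitely many poles. -/
lemma Expn.tailSum {ν : ℝ} (hA : 0 ≤ A) {σ : E → ℂ} {Z : ℕ → E → ℂ} (hσ : AnalyticOnNhd ℂ σ V)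
    (hσR : ∀ s ∈ V, ‖σ s‖ ≤ R) (h : Expn (A + 2) V U (fun n => eR (ν * n)) σ Z)
    (hU : ∀ s ∈ V, s ∈ U → 1 < (σ s).re) :
    ∃ Q : ℕ, Expn A V U (fun n => eR (ν * n)) (fun s => σ s - eps ν)
      fun N s => (∏ q ∈ Finset.range Q, dz ν (σ s + q)) * tailSum (fun n => Z n s) N := by
  obtain ⟨M, c, g, hc, hg, H⟩ := h
  have hdz : ∀ k : ℕ, AnalyticOnNhd ℂ (fun s => dz ν (σ s + k)) V := fun k s hs =>
    AnalyticAt.fun_comp ((differentiable_dz ν).analyticAt _) ((hσ s hs).add analyticAt_const)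
  have hprod : ∀ I : Finset ℕ, AnalyticOnNhd ℂ (fun s => ∏ q ∈ I, dz ν (σ s + q)) V :=
    fun I => Finset.analyticOnNhd_fun_prod _ fun q _ => hdz q
  have h1 : ∀ k ∈ Finset.range M, Expn A V U (fun n => eR (ν * n)) (fun s => σ s - eps ν)
      fun N s => (c k s * ∏ q ∈ (Finset.range M).erase k, dz ν (σ s + q)) *
        (dz ν (σ s + k) * zT ν 1 N (σ s + k)) := by
    intro k _
    refine Expn.smul ((hc k).mul (hprod _)) ?_
    have hk : (0 : ℝ) ≤ k := Nat.cast_nonneg k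
    refine ((zeta_expn ν zero_le_one le_rfl hA (-R - 1)).comp (φ := fun s => σ s + k)
      (hσ.add analyticOnNhd_const) (fun s hs => ?_) fun s hs hu => ?_).shift k fun s _ => ?_
    · have := (neg_le_neg (hσR s hs)).trans (neg_le_of_abs_le (abs_re_le_norm _))
      simp only [Set.mem_ofPred_eq, add_re, natCast_re]; linarith
    · have := hU s hs hu
      simp only [Set.mem_ofPred_eq, add_re, natCast_re]; linarith
    · ring
  have h2 := ((hg.tail (by linarith)).mono (A' := A) (by linarith)).smul
    (hprod (Finset.range M))
  refine ⟨M, ((Expn.sum _ h1).add (Expn.of_rem h2)).congr fun s hs hu N => ?_⟩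
  have s1 : ∀ k ∈ Finset.range M, Summable fun j : ℕ => c k s * (eR (ν * (N + 1 + j : ℕ)) *
      rpowC (((N + 1 + j : ℕ) : ℝ) + 1) (-(σ s + k))) := by
    intro k _
    refine (zT_summable zero_le_one ?_ N).mul_left _
    have hk : (0 : ℝ) ≤ k := Nat.cast_nonneg k
    have := hU s hs hu
    simp only [add_re, natCast_re]; linarith
  have s2 := hg.summable (by linarith) hs N
  have e : _root_.tailSum (fun n => Z n s) N =
      ∑ k ∈ Finset.range M, c k s * zT ν 1 N (σ s + k) +
        _root_.tailSum (fun n => g n s) N := by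
    simp only [_root_.tailSum, zT]
    simp only [← tsum_mul_left]
    rw [← Summable.tsum_finsetSum s1, ← (summable_sum s1).tsum_add s2]
    refine tsum_congr fun j => ?_
    rw [H s hs hu, Finset.mul_sum]
    congr 1
    exact Finset.sum_congr rfl fun k _ => by ring
  rw [e, mul_add, Finset.mul_sum]
  congr 1
  refine Finset.sum_congr rfl fun k hk => ?_
  rw [← Finset.mul_prod_erase _ _ hk]
  ring

/-- One step of the iteration defining multiple Lerch sums. -/
theorem Expn.step {μ lam α : ℝ} (hα : 0 ≤ α) (hα1 : α ≤ 1) (hA : 0 ≤ A) {x τ : E → ℂ}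
    {Y : ℕ → E → ℂ} (hx : AnalyticOnNhd ℂ x V) (hτ : AnalyticOnNhd ℂ τ V)
    (hxR : ∀ s ∈ V, ‖x s‖ ≤ R) (hτR : ∀ s ∈ V, ‖τ s‖ ≤ R)
    (h : Expn (A + R + 7) V U (fun n => eR (μ * n)) τ Y)
    (hU : ∀ s ∈ V, s ∈ U → 1 < (τ s + x s).re) :
    ∃ Q : ℕ, Expn A V U (fun n => eR ((μ + lam) * n))
      (fun s => τ s + x s - eps (μ + lam)) fun N s =>
        (∏ q ∈ Finset.range Q, dz (μ + lam) (τ s + x s + q)) *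
          _root_.tailSum (fun n => eR (lam * n) * rpowC ((n : ℝ) + α) (-x s) * Y n s) N := by
  have h' : Expn ((A + 2) + R + 5) V U (fun n => eR (μ * n)) τ Y := by
    rwa [show A + 2 + R + 5 = A + R + 7 by ring]
  obtain ⟨Q, hQ⟩ := Expn.tailSum hA (hτ.add hx) (R := R + R) (fun s hs =>
    (norm_add_le _ _).trans (add_le_add (hτR s hs) (hxR s hs)))
    (h'.mul_pow (lam := lam) hα hα1 hx hτ hxR hτR) hU
  refine ⟨Q, hQ.congr fun s _ _ N => ?_⟩
  congr 1
  refine tailSum_congr (fun n hn => ?_) N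
  rw [rpowC_in hα hα1 hn]

end

/-! ### Induction on the depth -/

/-- Iterated tail sums: `itS a i N` is the sum of `a 0 n_1 ⋯ a (i-1) n_i` over
`n_1 > ⋯ > n_i > N`, summed in the order `n_1, n_2, …`. -/
noncomputable def itS (a : ℕ → ℕ → ℂ) : ℕ → ℕ → ℂ
  | 0 => fun _ => 1
  | i + 1 => tailSum fun n => a i n * itS a i n

section
variable {E : Type*} [NormedAddCommGroup E] [NormedSpace ℂ E]

/-- Partial sums of a sequence of functions. -/
def psum (x : ℕ → E → ℂ) (i : ℕ) (s : E) : ℂ := ∑ j ∈ Finset.range i, x j s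

/-- `μ_i = λ_1 + ⋯ + λ_i`. -/
def muS (lam : ℕ → ℝ) (i : ℕ) : ℝ := ∑ j ∈ Finset.range i, lam j

/-- The number of `1 ≤ i' ≤ i` with `μ_{i'}` an integer. -/
noncomputable def rkS (lam : ℕ → ℝ) (i : ℕ) : ℕ := ∑ j ∈ Finset.range i, eps (muS lam (j + 1))

lemma eps_le_one (l : ℝ) : eps l ≤ 1 := by unfold eps; split_ifs <;> simp

lemma rkS_le (lam : ℕ → ℝ) (i : ℕ) : rkS lam i ≤ i := by
  refine (Finset.sum_le_sum fun j _ => eps_le_one _).trans ?_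
  simp

/-- The general term of a multiple Lerch sum in the variable of index `i`. -/
noncomputable def lt (lam al : ℕ → ℝ) (x : ℕ → E → ℂ) (s : E) (i n : ℕ) : ℂ :=
  eR (lam i * n) * rpowC ((n : ℝ) + al i) (-x i s)

/-- The linear form `s_1 + ⋯ + s_i - i + k` with `i = q.1 + 1`, `k = q.2`. -/
def fac (x : ℕ → E → ℂ) (q : ℕ × ℕ) (s : E) : ℂ := psum x (q.1 + 1) s - (q.1 + 1) + q.2

/-- The indices of the possible polar hyperplanes: the analogue of `S9` for parameters indexed by
`ℕ`. -/
def Adm (lam : ℕ → ℝ) (q : ℕ × ℕ) : Prop :=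
  q = (0, 0) ∨ (eps (muS lam (q.1 + 1)) = 1 ∧ q.1 ≠ 0 ∧ q.1 + 1 ≤ rkS lam (q.1 + 1) + q.2)

/-- The depth induction. After clearing finitely many admissible linear factors, the iterated tail
sums of depth `i + 1` have an expansion with leading exponent `s_1 + ⋯ + s_{i+1}` minus the number
of indices up to there at which `μ` is an integer: only at these does summation over `n > N`
raise the order of growth in `N` and create poles. As the order decreases at each step, the induction hypothesis is used
for all orders `A`. -/
theorem iterated_expn {V U : Set E} {r : ℕ} {lam al : ℕ → ℝ} {x : ℕ → E → ℂ} {R : ℝ} (hR : 0 ≤ R)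
    (hal : ∀ i, 0 ≤ al i) (hal1 : ∀ i, al i ≤ 1) (h0 : eps (lam 0) = 1)
    (hx : ∀ i, AnalyticOnNhd ℂ (x i) V) (hxR : ∀ i, ∀ s ∈ V, ‖x i s‖ ≤ R)
    (hU : ∀ s ∈ V, s ∈ U → ∀ i ≤ r, (i : ℝ) + 1 < (psum x (i + 1) s).re) (i : ℕ) (hi : i ≤ r) :
    ∀ A : ℝ, 0 ≤ A → ∃ T : Finset (ℕ × ℕ), (∀ q ∈ T, Adm lam q ∧ q.1 ≤ i) ∧
      Expn A V U (fun n => eR (muS lam (i + 1) * n))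
        (fun s => psum x (i + 1) s - rkS lam (i + 1))
        fun N s => (∏ q ∈ T, fac x q s) * itS (lt lam al x s) (i + 1) N := by
  have hps : ∀ i, AnalyticOnNhd ℂ (psum x i) V := fun i =>
    Finset.analyticOnNhd_fun_sum _ fun j _ => hx j
  induction i with
  | zero =>
    intro A hA
    refine ⟨{(0, 0)}, by simp [Adm], ?_⟩
    have h1 := (zeta_expn (lam 0) (hal 0) (hal1 0) hA (-R - 1)).comp (V := V) (U := U) (hx 0)
      (fun s hs => ?_) fun s hs hu => ?_
    · have e1 : muS lam (0 + 1) = lam 0 := by simp [muS]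
      have e2 : rkS lam (0 + 1) = eps (lam 0) := by simp [rkS, e1]
      have e3 : ∀ s, psum x (0 + 1) s = x 0 s := fun s => by simp [psum]
      simp only [e1, e2, e3]
      refine h1.congr fun s _ _ N => ?_
      have e4 : dz (lam 0) (x 0 s) = x 0 s - 1 := by
        unfold eps at h0
        unfold dz
        by_cases hl : ∃ z : ℤ, lam 0 = z
        · rw [if_pos hl]
        · rw [if_neg hl] at h0; omega
      rw [e4, Finset.prod_singleton]
      congr 1
      · simp [fac, psum]
      · simp [itS, lt, zT]
    · have := (neg_le_neg (hxR 0 s hs)).trans (neg_le_of_abs_le (abs_re_le_norm _))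
      simp only [Set.mem_ofPred_eq]; linarith
    · have := hU s hs hu 0 (Nat.zero_le _)
      simpa [psum] using this
  | succ i ih =>
    intro A hA
    set R' : ℝ := (i + 1) * R + (i + 1) with hR'
    have hi0 : (0 : ℝ) ≤ i := Nat.cast_nonneg i
    obtain ⟨T, hT, hE⟩ := ih (by omega) (A + R' + 7) (by positivity)
    have hrk : (rkS lam (i + 1) : ℝ) ≤ i + 1 := by exact_mod_cast rkS_le lam (i + 1)
    obtain ⟨Q, hQ⟩ := hE.step (τ := fun s => psum x (i + 1) s - rkS lam (i + 1))
      (lam := lam (i + 1)) (hal (i + 1)) (hal1 (i + 1)) hA (hx (i + 1))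
      ((hps (i + 1)).sub analyticOnNhd_const) (R := R')
      (fun s hs => (hxR _ s hs).trans (by rw [hR']; nlinarith))
      (fun s hs => by
        refine (norm_sub_le _ _).trans (add_le_add ?_ ?_)
        · refine (norm_sum_le _ _).trans ?_
          refine (Finset.sum_le_sum fun j _ => hxR j s hs).trans ?_
          simp
        · simpa using hrk)
      (fun s hs hu => by
        have := hU s hs hu (i + 1) hi
        rw [psum, Finset.sum_range_succ] at this
        push_cast at this
        simp only [psum, add_re, sub_re, natCast_re] at this ⊢
        linarith)
    have e1 : muS lam (i + 1) + lam (i + 1) = muS lam (i + 1 + 1) := by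
      rw [muS, muS, Finset.sum_range_succ _ (i + 1)]
    have e2 : ∀ s, psum x (i + 1) s + x (i + 1) s = psum x (i + 1 + 1) s := fun s => by
      rw [psum, psum, Finset.sum_range_succ _ (i + 1)]
    have e3 : rkS lam (i + 1 + 1) = rkS lam (i + 1) + eps (muS lam (i + 1 + 1)) := by
      rw [rkS, rkS, Finset.sum_range_succ _ (i + 1)]
    rw [e1] at hQ
    have e4 : ∀ s, psum x (i + 1) s - rkS lam (i + 1) + x (i + 1) s -
        eps (muS lam (i + 1 + 1)) = psum x (i + 1 + 1) s - rkS lam (i + 1 + 1) := fun s => by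
      rw [e3, ← e2]; push_cast; ring
    simp only [e4] at hQ
    have e5 : ∀ s N, tailSum (fun n => eR (lam (i + 1) * n) *
        rpowC ((n : ℝ) + al (i + 1)) (-x (i + 1) s) *
        ((∏ q ∈ T, fac x q s) * itS (lt lam al x s) (i + 1) n)) N =
        (∏ q ∈ T, fac x q s) * itS (lt lam al x s) (i + 1 + 1) N := by
      intro s N
      rw [show itS (lt lam al x s) (i + 1 + 1) N = tailSum (fun n => lt lam al x s (i + 1) n *
        itS (lt lam al x s) (i + 1) n) N from rfl]
      generalize itS (lt lam al x s) (i + 1) = S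
      simp only [tailSum]
      rw [← tsum_mul_left]
      refine tsum_congr fun k => ?_
      rw [lt]; ring
    simp only [e5] at hQ
    -- New poles appear only if `μ` is an integer; the lowest one comes from the leading exponent,
    -- whence the shift by `i + 1 - rkS lam (i + 1)`.
    by_cases hl : ∃ z : ℤ, muS lam (i + 1 + 1) = z
    · have hemb : Function.Injective fun q : ℕ => (i + 1, i + 1 - rkS lam (i + 1) + q) := by
        intro p q hpq
        simpa using hpq
      have heps : eps (muS lam (i + 1 + 1)) = 1 := by rw [eps, if_pos hl]
      have hrk' := rkS_le lam (i + 1)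
      have hdis : Disjoint ((Finset.range Q).map ⟨_, hemb⟩) T := by
        rw [Finset.disjoint_left]
        intro q hq hq'
        obtain ⟨p, _, rfl⟩ := Finset.mem_map.1 hq
        have := (hT _ hq').2
        simp at this
      refine ⟨((Finset.range Q).map ⟨_, hemb⟩).disjUnion T hdis, fun q hq => ?_,
        hQ.congr fun s hs hu N => ?_⟩
      · rcases Finset.mem_disjUnion.1 hq with h | h
        · obtain ⟨p, _, rfl⟩ := Finset.mem_map.1 h
          refine ⟨Or.inr ⟨heps, by simp, ?_⟩, le_rfl⟩
          simp only [Function.Embedding.coeFn_mk]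
          rw [e3, heps]
          omega
        · exact ⟨(hT q h).1, (hT q h).2.trans (Nat.le_succ i)⟩
      · rw [Finset.prod_disjUnion, Finset.prod_map, mul_assoc]
        congr 1
        refine Finset.prod_congr rfl fun q _ => ?_
        rw [dz, if_pos hl]
        simp only [Function.Embedding.coeFn_mk, fac]
        rw [← e2]
        push_cast [Nat.cast_sub hrk']
        ring
    · refine ⟨T, fun q hq => ⟨(hT q hq).1, (hT q hq).2.trans (Nat.le_succ i)⟩,
        hQ.congr fun s hs hu N => ?_⟩
      have hdz : ∀ w, dz (muS lam (i + 1 + 1)) w = 1 := fun w => if_neg hl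
      rw [Finset.prod_eq_one fun q _ => hdz _, one_mul]

end

/-! ### Multiple sums as iterated sums -/

/-- Strictly decreasing tuples of integers greater than `N`. -/
def Tup (i N : ℕ) : Type := {n : Fin i → ℕ // StrictAnti n ∧ ∀ j, N < n j}

/-- Appending a smallest entry `N + 1 + k` to a tuple of length `i`. -/
def snocTup (i N : ℕ) (p : Σ k : ℕ, Tup i (N + 1 + k)) : Tup (i + 1) N :=
  ⟨Fin.snoc (α := fun _ => ℕ) p.2.1 (N + 1 + p.1), by
    refine ⟨fun a b hab => ?_, fun j => ?_⟩
    · induction a using Fin.lastCases with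
      | last => exact absurd hab (Fin.le_last b).not_gt
      | cast a =>
        induction b using Fin.lastCases with
        | last => simpa using p.2.2.2 a
        | cast b => simpa using p.2.2.1 (by simpa using hab)
    · induction j using Fin.lastCases with
      | last => simp; omega
      | cast j =>
        have := p.2.2.2 j
        simp; omega⟩

lemma snocTup_bijective (i N : ℕ) : Function.Bijective (snocTup i N) := by
  constructor
  · rintro ⟨k, n, hn⟩ ⟨k', n', hn'⟩ h
    have h1 := congrArg Subtype.val h
    simp only [snocTup] at h1
    have h2 := congrFun h1 (Fin.last i)
    simp only [Fin.snoc_last] at h2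
    obtain rfl : k = k' := by omega
    have h3 : n = n' := by
      funext j
      simpa using congrFun h1 j.castSucc
    subst h3
    rfl
  · rintro ⟨n, hn, hN⟩
    have hl := hN (Fin.last i)
    refine ⟨⟨n (Fin.last i) - (N + 1), Fin.init n, ?_, fun j => ?_⟩, ?_⟩
    · exact fun a b hab => hn (by simpa using hab)
    · have : n (Fin.last i) < n j.castSucc := hn (Fin.castSucc_lt_last j)
      simp only [Fin.init]
      omega
    · apply Subtype.ext
      simp only [snocTup]
      rw [show N + 1 + (n (Fin.last i) - (N + 1)) = n (Fin.last i) by omega]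
      exact Fin.snoc_init_self n

/-- The bijection splitting off the smallest entry. -/
noncomputable def tupEquiv (i N : ℕ) : (Σ k : ℕ, Tup i (N + 1 + k)) ≃ Tup (i + 1) N :=
  Equiv.ofBijective _ (snocTup_bijective i N)

/-- The product of the weights of the entries of a tuple. -/
noncomputable def tw (a : ℕ → ℕ → ℂ) {i N : ℕ} (n : Tup i N) : ℂ := ∏ j : Fin i, a j (n.1 j)

lemma tw_snoc (a : ℕ → ℕ → ℂ) (i N : ℕ) (p : Σ k : ℕ, Tup i (N + 1 + k)) :
    tw a (tupEquiv i N p) = tw a p.2 * a i (N + 1 + p.1) := by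
  show ∏ j : Fin (i + 1), a j ((snocTup i N p).1 j) = _
  rw [Fin.prod_univ_castSucc]
  simp [snocTup, tw]

/-- Absolute convergence of the multiple sums, with the decay in the lower bound `N` of the
summation range that makes the induction on the depth work. -/
lemma tup_summable {a : ℕ → ℕ → ℂ} {t b K : ℕ → ℝ} {δ : ℝ} (hδ : 0 < δ) {r : ℕ}
    (ha : ∀ i n, 1 ≤ n → ‖a i n‖ ≤ K i * ((n : ℝ) + 1) ^ (-t i)) (hb0 : b 0 = 0)
    (hbs : ∀ i, b (i + 1) = b i + t i - 1 - δ) (hb : ∀ i ≤ r, 0 ≤ b i) (i : ℕ) (hi : i ≤ r) :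
    ∃ C, 0 ≤ C ∧ ∀ N, Summable (fun n : Tup i N => ‖tw a n‖) ∧
      ∑' n : Tup i N, ‖tw a n‖ ≤ C * ((N : ℝ) + 1) ^ (-b i) := by
  induction i with
  | zero =>
    refine ⟨1, zero_le_one, fun N => ?_⟩
    have hu : Unique (Tup 0 N) :=
      { default := ⟨Fin.elim0, fun x => x.elim0, fun x => x.elim0⟩
        uniq := fun x => Subtype.ext (funext fun j => j.elim0) }
    refine ⟨Summable.of_finite, ?_⟩
    rw [tsum_fintype]
    simp [tw, hb0]
  | succ i ih =>
    obtain ⟨C, hC, H⟩ := ih (by omega)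
    have hS : Summable fun k : ℕ => ((k : ℝ) + 1) ^ (-1 - δ) := by
      have := (summable_nat_add_iff 1).2 (Real.summable_nat_rpow.2 (by linarith : -1 - δ < -1))
      simpa using this
    have hK : 0 ≤ K i := by
      have := (norm_nonneg _).trans (ha i 1 le_rfl)
      exact nonneg_of_mul_nonneg_left this (by positivity)
    have hbd : ∀ N k : ℕ, (∑' n : Tup i (N + 1 + k), ‖tw a n‖) * ‖a i (N + 1 + k)‖ ≤
        C * K i * ((N : ℝ) + 1) ^ (-b (i + 1)) * ((k : ℝ) + 1) ^ (-1 - δ) := by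
      intro N k
      have hp := succ_pos' (N + 1 + k)
      refine (mul_le_mul (H _).2 (ha i _ (by omega)) (norm_nonneg _) (by positivity)).trans ?_
      have e : C * (((N + 1 + k : ℕ) : ℝ) + 1) ^ (-b i) * (K i *
          (((N + 1 + k : ℕ) : ℝ) + 1) ^ (-t i)) = C * K i *
          (((N + 1 + k : ℕ) : ℝ) + 1) ^ (-b (i + 1)) *
          (((N + 1 + k : ℕ) : ℝ) + 1) ^ (-1 - δ) := by
        rw [mul_mul_mul_comm, ← Real.rpow_add hp, mul_assoc (C * K i), ← Real.rpow_add hp, hbs]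
        congr 2; ring
      rw [e]
      have h1 : (((N + 1 + k : ℕ) : ℝ) + 1) ^ (-b (i + 1)) ≤ ((N : ℝ) + 1) ^ (-b (i + 1)) :=
        Real.rpow_le_rpow_of_nonpos (succ_pos' N) (by push_cast; linarith [succ_pos' k])
          (by linarith [hb (i + 1) hi])
      have h2 : (((N + 1 + k : ℕ) : ℝ) + 1) ^ (-1 - δ) ≤ ((k : ℝ) + 1) ^ (-1 - δ) :=
        Real.rpow_le_rpow_of_nonpos (succ_pos' k) (by push_cast; linarith [succ_pos' N])
          (by linarith)
      gcongr
    refine ⟨C * K i * ∑' k : ℕ, ((k : ℝ) + 1) ^ (-1 - δ),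
      mul_nonneg (mul_nonneg hC hK) (tsum_nonneg fun k => by positivity), fun N => ?_⟩
    have hin : ∀ k, HasSum (fun n : Tup i (N + 1 + k) => ‖tw a n‖ * ‖a i (N + 1 + k)‖)
        ((∑' n : Tup i (N + 1 + k), ‖tw a n‖) * ‖a i (N + 1 + k)‖) := fun k =>
      (H _).1.hasSum.mul_right _
    have hS' := hS.mul_left (C * K i * ((N : ℝ) + 1) ^ (-b (i + 1)))
    have hout : Summable fun k : ℕ =>
        (∑' n : Tup i (N + 1 + k), ‖tw a n‖) * ‖a i (N + 1 + k)‖ :=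
      Summable.of_nonneg_of_le (fun k => mul_nonneg (tsum_nonneg fun _ => norm_nonneg _)
        (norm_nonneg _)) (hbd N) hS'
    have hsig : Summable fun p : Σ k : ℕ, Tup i (N + 1 + k) => ‖tw a p.2‖ * ‖a i (N + 1 + p.1)‖ := by
      refine (summable_sigma_of_nonneg fun p => by positivity).2 ⟨fun k => (hin k).summable, ?_⟩
      exact hout.congr fun k => (hin k).tsum_eq.symm
    have hcomp : (fun n : Tup (i + 1) N => ‖tw a n‖) ∘ tupEquiv i N =
        fun p : Σ k : ℕ, Tup i (N + 1 + k) => ‖tw a p.2‖ * ‖a i (N + 1 + p.1)‖ := by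
      funext p
      simp only [Function.comp, tw_snoc, norm_mul]
    refine ⟨?_, ?_⟩
    · rw [← (tupEquiv i N).summable_iff, hcomp]; exact hsig
    · rw [← (tupEquiv i N).tsum_eq, show (∑' p, ‖tw a (tupEquiv i N p)‖) = ∑' p,
        ((fun n : Tup (i + 1) N => ‖tw a n‖) ∘ tupEquiv i N) p from rfl, hcomp, hsig.tsum_sigma]
      rw [tsum_congr fun k => (hin k).tsum_eq]
      refine (hout.tsum_le_tsum (hbd N) hS').trans ?_
      rw [tsum_mul_left]
      exact le_of_eq (by ring)

/-- The multiple sum over tuples equals the iterated sum. -/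
lemma tsum_tw {a : ℕ → ℕ → ℂ} {r : ℕ} (hs : ∀ i ≤ r, ∀ N, Summable fun n : Tup i N => ‖tw a n‖)
    (i : ℕ) (hi : i ≤ r) (N : ℕ) : ∑' n : Tup i N, tw a n = itS a i N := by
  induction i generalizing N with
  | zero =>
    have hu : Unique (Tup 0 N) :=
      { default := ⟨Fin.elim0, fun x => x.elim0, fun x => x.elim0⟩
        uniq := fun x => Subtype.ext (funext fun j => j.elim0) }
    rw [tsum_fintype]
    simp [tw, itS]
  | succ i ih =>
    have h1 := (hs (i + 1) hi N).of_norm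
    rw [← (tupEquiv i N).tsum_eq]
    have h2 := (tupEquiv i N).summable_iff.2 h1
    rw [show (∑' p, tw a (tupEquiv i N p)) = ∑' p, ((fun n => tw a n) ∘ tupEquiv i N) p from rfl,
      h2.tsum_sigma, itS, tailSum]
    refine tsum_congr fun k => ?_
    simp only [Function.comp, tw_snoc]
    rw [tsum_mul_right, ih (by omega), mul_comm]

/-! ### Continuation to balls -/

/-- A sequence with an expansion continues analytically, term by term, from `V ∩ U` to `V`. -/
lemma Expn.analytic {E : Type*} [NormedAddCommGroup E] [NormedSpace ℂ E] {A : ℝ} {V U : Set E}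
    {u : ℕ → ℂ} {τ : E → ℂ} {Y : ℕ → E → ℂ} (hV : IsOpen V) (hτ : AnalyticOnNhd ℂ τ V)
    (h : Expn A V U u τ Y) (N : ℕ) :
    ∃ G : E → ℂ, AnalyticOnNhd ℂ G V ∧ ∀ s ∈ V, s ∈ U → G s = Y N s := by
  obtain ⟨M, c, g, hc, hg, H⟩ := h
  refine ⟨_, ?_, fun s hs hu => (H s hs hu N).symm⟩
  refine AnalyticOnNhd.add (analyticOnNhd_const.mul
    (Finset.analyticOnNhd_fun_sum _ fun k _ => (hc k).mul fun s hs => ?_)) (hg.analytic hV N)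
  exact AnalyticAt.fun_comp ((differentiable_rpowC _).analyticAt _)
    ((hτ s hs).add analyticAt_const).neg

/-- On the domain of absolute convergence the multiple Lerch sum is an iterated sum. -/
lemma tsum_lt_eq {E : Type*} [NormedAddCommGroup E] [NormedSpace ℂ E] {lam al : ℕ → ℝ}
    (hal : ∀ i, 0 ≤ al i) (hal1 : ∀ i, al i ≤ 1) {x : ℕ → E → ℂ} {s : E} {r : ℕ}
    (hs : ∀ i ≤ r, (i : ℝ) + 1 < (psum x (i + 1) s).re) :
    ∑' n : Tup (r + 1) 0, tw (lt lam al x s) n = itS (lt lam al x s) (r + 1) 0 := by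
  -- Each summation of `n^{-1-δ}` loses `δ` in the decay exponent, so `δ` must be small compared
  -- to the distance of `s` from the boundary of the domain of convergence.
  obtain ⟨δ, hδ, hδ'⟩ : ∃ δ > 0, ∀ i ≤ r, ((i : ℝ) + 1) * δ ≤ (psum x (i + 1) s).re - (i + 1) := by
    have hne : (Finset.range (r + 1)).Nonempty := ⟨0, by simp⟩
    refine ⟨(Finset.range (r + 1)).inf' hne fun i => ((psum x (i + 1) s).re - (i + 1)) / (i + 1),
      ?_, fun i hi => ?_⟩
    · refine (Finset.lt_inf'_iff _).2 fun i hi => ?_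
      have := hs i (by simpa [Nat.lt_succ_iff] using hi)
      exact div_pos (by linarith) (succ_pos' i)
    · have := Finset.inf'_le (fun i : ℕ => ((psum x (i + 1) s).re - (i + 1)) / ((i : ℝ) + 1))
        (Finset.mem_range.2 (Nat.lt_succ_of_le hi))
      rw [le_div_iff₀ (succ_pos' i)] at this
      linarith
  refine tsum_tw (r := r + 1) (fun i hi N => ?_) (r + 1) le_rfl 0
  have key := tup_summable (a := lt lam al x s) (t := fun i => (x i s).re)
    (b := fun i => (psum x i s).re - i - i * δ)
    (K := fun i => (2 : ℝ) ^ (-(x i s).re) + (1 / 2 : ℝ) ^ (-(x i s).re)) hδ (r := r + 1)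
  suffices h : _ ∧ _ ∧ _ from
    let ⟨_, _, H⟩ := key h.1 (by simp [psum]) h.2.1 h.2.2 i hi
    (H N).1
  refine ⟨?_, ?_, ?_⟩
  · intro i n hn
    have hy := (admY_yIn (hal i) (hal1 i)).1 n
    have hy0 : (0 : ℝ) < 1 + yIn (al i) n := by linarith [hy.1]
    rw [lt, norm_mul, norm_eR, one_mul, rpowC_in (hal i) (hal1 i) hn, norm_mul,
      norm_rpowC (succ_pos' n), norm_rpowC hy0, neg_re, mul_comm]
    refine mul_le_mul_of_nonneg_right ?_ (by positivity)
    have p1 : (0 : ℝ) ≤ (2 : ℝ) ^ (-(x i s).re) := by positivity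
    have p2 : (0 : ℝ) ≤ (1 / 2 : ℝ) ^ (-(x i s).re) := by positivity
    rcases le_total (x i s).re 0 with h | h
    · have := Real.rpow_le_rpow hy0.le (by linarith [hy.2] : 1 + yIn (al i) n ≤ 2)
        (by linarith : 0 ≤ -(x i s).re)
      linarith
    · have := Real.rpow_le_rpow_of_nonpos (by norm_num : (0 : ℝ) < 1 / 2)
        (by linarith [hy.1] : 1 / 2 ≤ 1 + yIn (al i) n) (by linarith : -(x i s).re ≤ 0)
      linarith
  · intro i
    simp only [psum, Finset.sum_range_succ, add_re]
    push_cast; ring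
  · intro i hi
    rcases i with _ | i
    · simp [psum]
    · have := hδ' i (by omega)
      push_cast; linarith

/-- Extension by zero of a function on `Fin (r + 1)` to `ℕ`. -/
def ext0 {β : Type*} [Zero β] {r : ℕ} (f : Fin (r + 1) → β) (j : ℕ) : β :=
  if h : j < r + 1 then f ⟨j, h⟩ else 0

@[simp] lemma ext0_val {β : Type*} [Zero β] {r : ℕ} (f : Fin (r + 1) → β) (j : Fin (r + 1)) :
    ext0 f j = f j := dif_pos j.2

lemma sum_range_eq_Iic {β : Type*} [AddCommMonoid β] {r : ℕ} (f : ℕ → β) (i : Fin (r + 1)) :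
    ∑ j ∈ Finset.range ((i : ℕ) + 1), f j = ∑ j ∈ Finset.Iic i, f (j : ℕ) := by
  rw [Nat.range_succ_eq_Iic, ← Fin.map_valEmbedding_Iic, Finset.sum_map]
  rfl

/-- The linear form `s_1 + ⋯ + s_i - i + k` defining a hyperplane. -/
def lf {r : ℕ} (q : Fin (r + 1) × ℕ) (s : Fin (r + 1) → ℂ) : ℂ :=
  (∑ j ∈ Finset.Iic q.1, s j) - ((q.1 : ℕ) + 1 : ℂ) + (q.2 : ℂ)

section
variable {r : ℕ} (lam al : Fin (r + 1) → ℝ)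

lemma muS_ext0 (i : Fin (r + 1)) : muS (ext0 lam) (i + 1) = ∑ j ∈ Finset.Iic i, lam j := by
  rw [muS, sum_range_eq_Iic]; simp

lemma rkS_ext0 (i : Fin (r + 1)) : rkS (ext0 lam) (i + 1) = rankIdx lam i := by
  classical
  rw [rkS, sum_range_eq_Iic, rankIdx, Nat.card_eq_fintype_card, Fintype.card_subtype,
    Finset.card_filter, ← Finset.sum_filter_add_sum_filter_not Finset.univ (fun j => j ≤ i)]
  rw [Finset.sum_eq_zero (s := Finset.univ.filter fun j => ¬ j ≤ i), add_zero]
  · refine Finset.sum_congr (by ext; simp) fun j hj => ?_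
    rw [muS_ext0, eps]
    have : j ≤ i := by simpa using hj
    simp [isIntIdx, this]
  · intro j hj
    have : ¬ j ≤ i := by simpa using hj
    simp [this]

lemma S9_of_adm (i : Fin (r + 1)) (k : ℕ) (h : Adm (ext0 lam) ((i : ℕ), k)) : S9 lam i k := by
  rcases h with h | ⟨h1, h2, h3⟩
  · simp only [Prod.mk.injEq] at h
    exact Or.inl ⟨Fin.ext h.1, h.2⟩
  · refine Or.inr ⟨?_, fun h => h2 (by simp [h]), ?_⟩
    · simp only [muS_ext0, eps] at h1
      by_contra h
      rw [muS_ext0] at h1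
      unfold isIntIdx at h
      rw [if_neg h] at h1
      omega
    · simpa only [rkS_ext0] using h3

lemma psum_ext0 (s : Fin (r + 1) → ℂ) (i : Fin (r + 1)) :
    psum (fun j (s : Fin (r + 1) → ℂ) => ext0 s j) (i + 1) s = ∑ j ∈ Finset.Iic i, s j := by
  rw [psum, sum_range_eq_Iic]; simp

lemma multipleLerch_eq (s : Fin (r + 1) → ℂ) : multipleLerch lam al s =
    ∑' n : Tup (r + 1) 0, tw (lt (ext0 lam) (ext0 al) (fun j s => ext0 s j) s) n := by
  refine tsum_congr fun n => ?_
  rw [lerchTerm, ← Finset.prod_div_distrib]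
  unfold tw
  refine Finset.prod_congr rfl fun j _ => ?_
  simp only [lt, ext0_val]
  rw [rpowC_neg, div_eq_mul_inv]

variable {lam al}

/-- Continuation of the multiple Lerch function to a ball, after clearing finitely many of the
admissible linear factors. -/
theorem local_continuation (hal : ∀ i, al i ∈ Set.Ico (0 : ℝ) 1) (h1 : isIntIdx lam 0) {R : ℝ}
    (hR : 0 ≤ R) : ∃ (T : Finset (Fin (r + 1) × ℕ)) (G : (Fin (r + 1) → ℂ) → ℂ),
      (∀ q ∈ T, S9 lam q.1 q.2) ∧ AnalyticOnNhd ℂ G (Metric.ball 0 R) ∧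
      ∀ s ∈ Metric.ball 0 R, s ∈ Ur (r + 1) 0 →
        G s = (∏ q ∈ T, lf q s) * multipleLerch lam al s := by
  have ha : ∀ i, 0 ≤ ext0 al i ∧ ext0 al i ≤ 1 := by
    intro i
    unfold ext0
    split_ifs with h
    · exact ⟨(hal _).1, (hal _).2.le⟩
    · simp
  have h0 : eps (ext0 lam 0) = 1 := by
    have := muS_ext0 lam 0
    simp only [muS, Fin.val_zero, zero_add, Finset.sum_range_one] at this
    rw [this]
    exact if_pos h1
  have hx : ∀ i, AnalyticOnNhd ℂ (fun s : Fin (r + 1) → ℂ => ext0 s i) (Metric.ball 0 R) := by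
    intro i
    unfold ext0
    by_cases h : i < r + 1
    · simp only [h, dif_pos]
      exact (ContinuousLinearMap.proj (R := ℂ) (φ := fun _ : Fin (r + 1) => ℂ)
        ⟨i, h⟩).analyticOnNhd _
    · simp only [h, dif_neg, not_false_iff]
      exact analyticOnNhd_const
  have hxR : ∀ i, ∀ s ∈ Metric.ball (0 : Fin (r + 1) → ℂ) R, ‖ext0 s i‖ ≤ R := by
    intro i s hs
    rw [mem_ball_zero_iff] at hs
    unfold ext0
    split_ifs with h
    · exact (norm_le_pi_norm s _).trans hs.le
    · simpa using hR
  have hU : ∀ s ∈ Metric.ball (0 : Fin (r + 1) → ℂ) R, s ∈ Ur (r + 1) 0 → ∀ i ≤ r,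
      (i : ℝ) + 1 < (psum (fun j (s : Fin (r + 1) → ℂ) => ext0 s j) (i + 1) s).re := by
    intro s _ hu i hi
    have := hu ⟨i, by omega⟩
    rw [← psum_ext0] at this
    simpa using this
  obtain ⟨T, hT, hE⟩ := iterated_expn (U := Ur (r + 1) 0) hR (fun i => (ha i).1)
    (fun i => (ha i).2) h0 hx hxR hU r le_rfl 0 le_rfl
  obtain ⟨G, hG, H⟩ := hE.analytic Metric.isOpen_ball
    ((Finset.analyticOnNhd_fun_sum _ fun j _ => hx j).sub analyticOnNhd_const) 0
  let φ : ℕ × ℕ → Fin (r + 1) × ℕ := fun q => (⟨min q.1 r, by omega⟩, q.2)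
  have hφ : ∀ q ∈ T, ((φ q).1 : ℕ) = q.1 := fun q hq => min_eq_left (hT q hq).2
  have hinj : Set.InjOn φ T := by
    intro p hp q hq h
    refine Prod.ext ?_ (congrArg (fun q => q.2) h : (φ p).2 = (φ q).2)
    rw [← hφ p hp, ← hφ q hq, h]
  classical
  refine ⟨T.image φ, G, fun q hq => ?_, hG, fun s hs hu => ?_⟩
  · obtain ⟨p, hp, rfl⟩ := Finset.mem_image.1 hq
    refine S9_of_adm lam _ _ ?_
    rw [hφ p hp]
    exact (hT p hp).1
  · rw [H s hs hu, multipleLerch_eq, tsum_lt_eq (fun i => (ha i).1) (fun i => (ha i).2)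
      (hU s hs hu), Finset.prod_image hinj]
    congr 1
    refine Finset.prod_congr rfl fun q hq => ?_
    rw [fac, lf, ← psum_ext0, hφ q hq]

end

/-! ### Gluing by the identity theorem -/

section
variable {r : ℕ}

lemma analytic_lf (q : Fin (r + 1) × ℕ) (V : Set (Fin (r + 1) → ℂ)) :
    AnalyticOnNhd ℂ (lf q) V := by
  have h : AnalyticOnNhd ℂ (fun s : Fin (r + 1) → ℂ => ∑ j ∈ Finset.Iic q.1, s j) V :=
    Finset.analyticOnNhd_fun_sum _ fun j _ =>
      (ContinuousLinearMap.proj (R := ℂ) (φ := fun _ : Fin (r + 1) => ℂ) j).analyticOnNhd _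
  exact (h.sub analyticOnNhd_const).add analyticOnNhd_const

lemma analytic_prod_lf (T : Finset (Fin (r + 1) × ℕ)) (V : Set (Fin (r + 1) → ℂ)) :
    AnalyticOnNhd ℂ (fun s => ∏ q ∈ T, lf q s) V :=
  Finset.analyticOnNhd_fun_prod _ fun q _ => analytic_lf q V

lemma continuous_prod_lf (T : Finset (Fin (r + 1) × ℕ)) :
    Continuous fun s => ∏ q ∈ T, lf q s :=
  continuousOn_univ.1 (analytic_prod_lf T Set.univ).continuousOn

lemma lf_eq_zero_iff (q : Fin (r + 1) × ℕ) (s : Fin (r + 1) → ℂ) :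
    lf q s = 0 ↔ s ∈ Hplane (r + 1) q.1 q.2 := by
  rw [lf, Hplane, Set.mem_ofPred_eq, ← sub_eq_zero (b := (_ : ℂ) - _)]
  constructor <;> intro h <;> rw [← h] <;> ring

lemma prod_lf_ne_zero {P : Fin (r + 1) → ℕ → Prop} {T : Finset (Fin (r + 1) × ℕ)}
    (hT : ∀ q ∈ T, P q.1 q.2) {s : Fin (r + 1) → ℂ} (hs : s ∉ polarSet P) :
    ∏ q ∈ T, lf q s ≠ 0 :=
  Finset.prod_ne_zero_iff.2 fun q hq h =>
    hs ⟨q.1, q.2, hT q hq, (lf_eq_zero_iff q s).1 h⟩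

lemma Ur_notMem_polarSet (P : Fin (r + 1) → ℕ → Prop) {s : Fin (r + 1) → ℂ}
    (hs : s ∈ Ur (r + 1) 0) : s ∉ polarSet P := by
  rintro ⟨i, k, -, h⟩
  have h1 := hs i
  rw [Hplane, Set.mem_ofPred_eq] at h
  rw [h] at h1
  simp at h1
  have : (0 : ℝ) ≤ k := Nat.cast_nonneg k
  linarith

lemma isOpen_Ur : IsOpen (Ur (r + 1) 0) := by
  have : Ur (r + 1) 0 = ⋂ i : Fin (r + 1), {s : Fin (r + 1) → ℂ |
      ((i : ℕ) + 1 - ((0 : ℤ) : ℝ) : ℝ) < (∑ j ∈ Finset.Iic i, s j).re} := by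
    ext s; simp [Ur]
  rw [this]
  refine isOpen_iInter_of_finite fun i => isOpen_lt continuous_const ?_
  fun_prop

lemma two_mem_Ur : (fun _ => 2 : Fin (r + 1) → ℂ) ∈ Ur (r + 1) 0 := by
  intro i
  simp
  have : (0 : ℝ) ≤ (i : ℕ) := Nat.cast_nonneg _
  linarith

lemma two_mem_ball {R : ℝ} (hR : 3 ≤ R) : (fun _ => 2 : Fin (r + 1) → ℂ) ∈ Metric.ball 0 R := by
  rw [mem_ball_zero_iff]
  refine lt_of_le_of_lt (pi_norm_const_le (2 : ℂ)) ?_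
  norm_num
  linarith

/-- Two local continuations with different denominators agree on the smaller ball, by the
identity theorem: they agree on the part of the domain of convergence lying in it. -/
lemma cross_eq {L : (Fin (r + 1) → ℂ) → ℂ} {R R' : ℝ} (hR : 3 ≤ R) (hRR : R ≤ R')
    {T T' : Finset (Fin (r + 1) × ℕ)} {G G' : (Fin (r + 1) → ℂ) → ℂ}
    (hG : AnalyticOnNhd ℂ G (Metric.ball 0 R)) (hG' : AnalyticOnNhd ℂ G' (Metric.ball 0 R'))
    (h : ∀ s ∈ Metric.ball 0 R, s ∈ Ur (r + 1) 0 → G s = (∏ q ∈ T, lf q s) * L s)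
    (h' : ∀ s ∈ Metric.ball 0 R', s ∈ Ur (r + 1) 0 → G' s = (∏ q ∈ T', lf q s) * L s)
    {s : Fin (r + 1) → ℂ} (hs : s ∈ Metric.ball (0 : Fin (r + 1) → ℂ) R) :
    G s * ∏ q ∈ T', lf q s = G' s * ∏ q ∈ T, lf q s := by
  have hsub := Metric.ball_subset_ball (x := (0 : Fin (r + 1) → ℂ)) hRR
  refine AnalyticOnNhd.eqOn_of_preconnected_of_eventuallyEq (hG.mul (analytic_prod_lf T' _))
    ((hG'.mono hsub).mul (analytic_prod_lf T _)) (convex_ball _ _).isPreconnected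
    (two_mem_ball hR) ?_ hs
  filter_upwards [isOpen_Ur.mem_nhds two_mem_Ur, Metric.isOpen_ball.mem_nhds (two_mem_ball hR)]
    with z hz hzR
  rw [h z hzR hz, h' z (hsub hzR) hz]
  ring

/-- A function on the domain of convergence which continues to every ball after multiplication by
finitely many linear factors taken from `P` continues to the complement of the polar set, with at
most simple poles. -/
theorem glue {P : Fin (r + 1) → ℕ → Prop} {L : (Fin (r + 1) → ℂ) → ℂ}
    (H : ∀ R : ℝ, 0 ≤ R → ∃ (T : Finset (Fin (r + 1) × ℕ)) (G : (Fin (r + 1) → ℂ) → ℂ),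
      (∀ q ∈ T, P q.1 q.2) ∧ AnalyticOnNhd ℂ G (Metric.ball 0 R) ∧
      ∀ s ∈ Metric.ball 0 R, s ∈ Ur (r + 1) 0 → G s = (∏ q ∈ T, lf q s) * L s) :
    ∃ F : (Fin (r + 1) → ℂ) → ℂ, AnalyticOnNhd ℂ F (polarSet P)ᶜ ∧
      (∀ s ∈ Ur (r + 1) 0, F s = L s) ∧ SimplePolesAlong P F := by
  classical
  have H' : ∀ n : ℕ, ∃ (T : Finset (Fin (r + 1) × ℕ)) (G : (Fin (r + 1) → ℂ) → ℂ),
      (∀ q ∈ T, P q.1 q.2) ∧ AnalyticOnNhd ℂ G (Metric.ball 0 ((n : ℝ) + 3)) ∧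
      ∀ s ∈ Metric.ball 0 ((n : ℝ) + 3), s ∈ Ur (r + 1) 0 → G s = (∏ q ∈ T, lf q s) * L s :=
    fun n => H _ (by positivity)
  choose T G hT hG hL using H'
  have h3 : ∀ n : ℕ, (3 : ℝ) ≤ (n : ℝ) + 3 := fun n => by
    linarith [(Nat.cast_nonneg n : (0 : ℝ) ≤ n)]
  have cross : ∀ m n : ℕ, ∀ s ∈ Metric.ball (0 : Fin (r + 1) → ℂ) ((m : ℝ) + 3),
      s ∈ Metric.ball (0 : Fin (r + 1) → ℂ) ((n : ℝ) + 3) →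
      G m s * ∏ q ∈ T n, lf q s = G n s * ∏ q ∈ T m, lf q s := by
    intro m n s hm hn
    rcases le_total m n with h | h
    · exact cross_eq (h3 m) (by gcongr) (hG m) (hG n) (hL m) (hL n) hm
    · exact (cross_eq (h3 n) (by gcongr) (hG n) (hG m) (hL n) (hL m) hn).symm
  have cover : ∀ s : Fin (r + 1) → ℂ, ∃ n : ℕ,
      s ∈ Metric.ball (0 : Fin (r + 1) → ℂ) ((n : ℝ) + 3) := by
    intro s
    obtain ⟨n, hn⟩ := exists_nat_gt ‖s‖
    exact ⟨n, mem_ball_zero_iff.2 (by linarith)⟩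
  have F_ex : ∃ F : (Fin (r + 1) → ℂ) → ℂ, ∀ n : ℕ,
      ∀ s ∈ Metric.ball (0 : Fin (r + 1) → ℂ) ((n : ℝ) + 3), ∏ q ∈ T n, lf q s ≠ 0 →
        F s = G n s / ∏ q ∈ T n, lf q s := by
    refine ⟨fun s => if h : ∃ n : ℕ, s ∈ Metric.ball (0 : Fin (r + 1) → ℂ) ((n : ℝ) + 3) ∧
      ∏ q ∈ T n, lf q s ≠ 0 then G h.choose s / ∏ q ∈ T h.choose, lf q s else 0,
      fun n s hs hp => ?_⟩
    have h : ∃ n : ℕ, s ∈ Metric.ball (0 : Fin (r + 1) → ℂ) ((n : ℝ) + 3) ∧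
      ∏ q ∈ T n, lf q s ≠ 0 := ⟨n, hs, hp⟩
    beta_reduce
    rw [dif_pos h, div_eq_div_iff h.choose_spec.2 hp]
    exact cross _ _ s h.choose_spec.1 hs
  obtain ⟨F, F_eq⟩ := F_ex
  refine ⟨F, ?_, ?_, ?_⟩
  · intro p hp
    obtain ⟨n, hn⟩ := cover p
    have hne := prod_lf_ne_zero (hT n) hp
    refine ((hG n p hn).div (analytic_prod_lf (T n) _ p hn) hne).congr ?_
    filter_upwards [Metric.isOpen_ball.mem_nhds hn,
      (continuous_prod_lf (T n)).continuousAt.eventually_ne hne] with s hs hs'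
    exact (F_eq n s hs hs').symm
  · intro s hs
    have hp := Ur_notMem_polarSet P hs
    obtain ⟨n, hn⟩ := cover s
    rw [F_eq n s hn (prod_lf_ne_zero (hT _) hp), hL n s hn hs, mul_div_cancel_left₀ _ (prod_lf_ne_zero (hT _) hp)]
  · intro p S hS
    obtain ⟨n, hn⟩ := cover p
    refine ⟨Metric.ball 0 ((n : ℝ) + 3) ∩ {s | ∏ q ∈ T n \ S, lf q s ≠ 0},
      fun s => G n s / (∏ q ∈ T n \ S, lf q s) * ∏ q ∈ S \ T n, lf q s,
      Metric.isOpen_ball.inter (isOpen_ne_fun (continuous_prod_lf _) continuous_const),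
      ⟨hn, ?_⟩, ?_, ?_⟩
    · refine Finset.prod_ne_zero_iff.2 fun q hq h => ?_
      rw [Finset.mem_sdiff] at hq
      exact hq.2 ((hS q.1 q.2).2 ⟨hT _ q hq.1, (lf_eq_zero_iff q p).1 h⟩)
    · exact (((hG n).mono Set.inter_subset_left).div (analytic_prod_lf _ _)
        fun s hs => hs.2).mul (analytic_prod_lf _ _)
    · rintro s ⟨hs, hne⟩ hp
      rw [Set.mem_ofPred_eq] at hne
      beta_reduce
      rw [F_eq n s hs (prod_lf_ne_zero (hT _) hp)]
      change _ = (∏ q ∈ S, lf q s) * _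
      have hi : ∏ q ∈ T n ∩ S, lf q s ≠ 0 :=
        prod_lf_ne_zero (fun q hq => hT n q (Finset.mem_inter.1 hq).1) hp
      rw [← Finset.prod_inter_mul_prod_sdiff S (T n), ← Finset.prod_inter_mul_prod_sdiff (T n) S,
        Finset.inter_comm S]
      field_simp

end

/-- **Theorem 2, case `i_1 = 1`.** If `μ_1 ∈ ℤ`, the multiple Lerch zeta function
continues meromorphically to `ℂ^r` with at most simple poles along the members of `S`. -/
theorem stmt_9 (r : ℕ) (lam al : Fin (r + 1) → ℝ)
    (hlam : ∀ i, lam i ∈ Set.Ico (0 : ℝ) 1) (hal : ∀ i, al i ∈ Set.Ico (0 : ℝ) 1)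
    (h1 : isIntIdx lam 0) :
    ∃ F : (Fin (r + 1) → ℂ) → ℂ,
      AnalyticOnNhd ℂ F (polarSet (S9 lam))ᶜ ∧
      (∀ s ∈ Ur (r + 1) 0, F s = multipleLerch lam al s) ∧
      SimplePolesAlong (S9 lam) F :=
  glue fun _ hR => local_continuation hal h1 hR
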